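/- arXiv:1902.02237 — 3 statements merged into one kernel-verified Lean document; each statement's English description precedes it below -/
import Mathlib

section
/- Let k be a field and let R be a noetherian Hopf k-algebra such that R⊗_k R is a domain, and suppose the Ore extension T=R[x;σ,δ] admits a Hopf algebra structure with R a Hopf subalgebra. Then after a change of the variable x (with corresponding adjustments to σ and δ) one can ensure that ε(x)=0 and that Δ(x) = s(1⊗x) + t(x⊗1) + w for some s, t, w ∈ R⊗_k R; i.e., in the expression Δ(x) = s(1⊗x) + t(x⊗1) + v(x⊗x) + w with s,t,v,w ∈ R⊗_k R, the coefficient v is zero. -/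
open scoped TensorProduct

/-- `T` is an Ore (skew polynomial) extension `R[x; σ, δ]` of `R`, embedded via `ι`:
`δ` is a `σ`-derivation, `ι` is injective, `x · ι(r) = ι(σ r) · x + ι(δ r)`, and
`T` is a free left `R`-module with basis `{xⁱ : i ≥ 0}`. -/
structure IsOreExtension (k : Type*) {R T : Type*} [Field k] [Ring R] [Algebra k R]
    [Ring T] [Algebra k T] (σ : R ≃ₐ[k] R) (δ : R →ₗ[k] R) (ι : R →ₐ[k] T) (x : T) : Prop where
  isSigmaDerivation : ∀ a b : R, δ (a * b) = σ a * δ b + δ a * b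
  injective : Function.Injective ι
  rel : ∀ r : R, x * ι r = ι (σ r) * x + ι (δ r)
  free : ∀ t : T, ∃! a : ℕ →₀ R, t = a.sum fun i r => ι r * x ^ i

/-- A Hopf `k`-algebra structure on the `k`-algebra `T`, bundled as data. -/
structure HopfAlgebraStructure (k T : Type*) [Field k] [Ring T] [Algebra k T] where
  comul : T →ₗ[k] T ⊗[k] T
  counit : T →ₗ[k] k
  antipode : T →ₗ[k] T
  comul_one : comul 1 = 1
  comul_mul : ∀ a b : T, comul (a * b) = comul a * comul b
  counit_one : counit 1 = 1
  counit_mul : ∀ a b : T, counit (a * b) = counit a * counit b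
  coassoc : ∀ t : T, TensorProduct.map comul LinearMap.id (comul t) =
      (TensorProduct.assoc k T T T).symm (TensorProduct.map LinearMap.id comul (comul t))
  counit_comul : ∀ t : T,
      TensorProduct.lid k T (TensorProduct.map counit LinearMap.id (comul t)) = t
  comul_counit : ∀ t : T,
      TensorProduct.rid k T (TensorProduct.map LinearMap.id counit (comul t)) = t
  antipode_mul_id : ∀ t : T,
      LinearMap.mul' k T (TensorProduct.map antipode LinearMap.id (comul t))
        = algebraMap k T (counit t)
  id_mul_antipode : ∀ t : T,
      LinearMap.mul' k T (TensorProduct.map LinearMap.id antipode (comul t))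
        = algebraMap k T (counit t)

/-- The Hopf algebra structure `H` on `T` extends that of the Hopf algebra `R`, i.e. `R` is
(the image of) a Hopf subalgebra of `T` via the injective algebra map `ι`. -/
def ExtendsHopf (k : Type*) {R T : Type*} [Field k] [Ring R] [HopfAlgebra k R]
    [Ring T] [Algebra k T] (ι : R →ₐ[k] T) (H : HopfAlgebraStructure k T) : Prop :=
  (∀ r : R, H.counit (ι r) = Coalgebra.counit r) ∧
  (∀ r : R, H.comul (ι r) =
      TensorProduct.map ι.toLinearMap ι.toLinearMap (Coalgebra.comul r)) ∧
  (∀ r : R, H.antipode (ι r) = ι (HopfAlgebra.antipode (R := k) r))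

namespace OreAux

section basics
variable {k R T : Type*} [Field k] [Ring R] [Algebra k R] [Ring T] [Algebra k T]

/-- The map `a ↦ ∑ ι(aᵢ) xⁱ`. -/
noncomputable def osum (ι : R →ₐ[k] T) (x : T) : (ℕ →₀ R) →ₗ[k] T :=
  Finsupp.lsum k fun i => (LinearMap.mulRight k (x ^ i)) ∘ₗ ι.toLinearMap

theorem osum_apply (ι : R →ₐ[k] T) (x : T) (a : ℕ →₀ R) :
    osum ι x a = a.sum fun i r => ι r * x ^ i := by
  rfl

theorem osum_single (ι : R →ₐ[k] T) (x : T) (i : ℕ) (r : R) :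
    osum ι x (Finsupp.single i r) = ι r * x ^ i := by
  simp [osum]

theorem free_iff (ι : R →ₐ[k] T) (x : T) :
    (∀ t : T, ∃! a : ℕ →₀ R, t = a.sum fun i r => ι r * x ^ i) ↔
      Function.Bijective (osum ι x) := by
  rw [Function.bijective_iff_existsUnique]
  simp only [osum_apply, eq_comm]

variable {σ : R ≃ₐ[k] R} {δ : R →ₗ[k] R} {ι : R →ₐ[k] T} {x : T}

/-- Coefficients with respect to the basis `xⁱ`. -/
noncomputable def P (hT : IsOreExtension k σ δ ι x) : T ≃ₗ[k] (ℕ →₀ R) :=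
  (LinearEquiv.ofBijective (osum ι x) ((free_iff ι x).1 hT.free)).symm

variable (hT : IsOreExtension k σ δ ι x)

theorem P_symm (a : ℕ →₀ R) : (P hT).symm a = osum ι x a := rfl

theorem P_osum (a : ℕ →₀ R) : P hT (osum ι x a) = a := by
  rw [← P_symm hT, LinearEquiv.apply_symm_apply]

theorem P_mon (i : ℕ) (r : R) : P hT (ι r * x ^ i) = Finsupp.single i r := by
  rw [← osum_single, P_osum]

theorem ore_induction (hT : IsOreExtension k σ δ ι x) {p : T → Prop} (h : ∀ i r, p (ι r * x ^ i))
    (hadd : ∀ a b, p a → p b → p (a + b)) (t : T) : p t := by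
  obtain ⟨a, rfl⟩ := (P hT).symm.surjective t
  rw [P_symm]
  induction a using Finsupp.induction_linear with
  | zero => simpa using h 0 0
  | add f g hf hg => rw [map_add]; exact hadd _ _ hf hg
  | single i r => rw [osum_single]; exact h i r

theorem P_ι (r : R) : P hT (ι r) = Finsupp.single 0 r := by
  simpa using P_mon hT 0 r

theorem P_one : P hT 1 = Finsupp.single 0 1 := by
  simpa using P_ι hT 1

theorem P_x : P hT x = Finsupp.single 1 1 := by
  simpa using P_mon hT 1 1

theorem P_ι_mul (r : R) (t : T) (i : ℕ) : P hT (ι r * t) i = r * P hT t i := by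
  induction t using ore_induction hT with
  | h j s =>
    rw [← mul_assoc, ← map_mul, P_mon, P_mon]
    simp only [Finsupp.single_apply]
    split_ifs <;> simp
  | hadd a b ha hb => rw [mul_add, map_add, map_add, Finsupp.add_apply, Finsupp.add_apply, ha, hb, mul_add]

theorem P_x_mul (t : T) (i : ℕ) :
    P hT (x * t) (i + 1) = σ (P hT t i) + δ (P hT t (i + 1)) := by
  induction t using ore_induction hT with
  | h j s =>
    rw [← mul_assoc, hT.rel, add_mul, mul_assoc, ← pow_succ', map_add (P hT), P_mon, P_mon, P_mon]
    simp only [Finsupp.add_apply, Finsupp.single_apply, add_left_inj]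
    split_ifs <;> simp
  | hadd a b ha hb =>
    rw [mul_add, map_add (P hT), map_add (P hT), Finsupp.add_apply, Finsupp.add_apply,
      Finsupp.add_apply, ha, hb, map_add σ, map_add δ]
    abel

/-- `t` has degree at most `n`. -/
def DegLE (n : ℕ) (t : T) : Prop := ∀ i, n < i → P hT t i = 0

theorem DegLE.mono {n m : ℕ} {t : T} (h : DegLE hT n t) (hnm : n ≤ m) : DegLE hT m t :=
  fun i hi => h i (by omega)

theorem top_xpow (m n : ℕ) (t : T) (h : DegLE hT n t) :
    DegLE hT (m + n) (x ^ m * t) ∧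
      P hT (x ^ m * t) (m + n) = (σ ^ m : R ≃ₐ[k] R) (P hT t n) := by
  induction m with
  | zero => simpa using h
  | succ m ih =>
    obtain ⟨h1, h2⟩ := ih
    rw [pow_succ', mul_assoc]
    constructor
    · intro i hi
      obtain ⟨i, rfl⟩ : ∃ j, i = j + 1 := ⟨i - 1, by omega⟩
      rw [P_x_mul, h1 i (by omega), h1 (i + 1) (by omega)]
      simp
    · have : m + 1 + n = (m + n) + 1 := by omega
      rw [this, P_x_mul, h1 (m + n + 1) (by omega), h2]
      simp [pow_succ']

theorem top_mul (m n : ℕ) (u t : T) (hu : DegLE hT m u) (h : DegLE hT n t) :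
    DegLE hT (m + n) (u * t) ∧
      P hT (u * t) (m + n) = P hT u m * (σ ^ m : R ≃ₐ[k] R) (P hT t n) := by
  have key : ∀ i, P hT (u * t) i = (P hT u).sum fun j r => r * P hT (x ^ j * t) i := by
    intro i
    conv_lhs => rw [← (P hT).symm_apply_apply u, P_symm, osum_apply]
    rw [Finsupp.sum_mul, Finsupp.sum, map_sum, Finsupp.finsetSum_apply]
    refine Finset.sum_congr rfl fun j _ => ?_
    rw [mul_assoc, P_ι_mul]
  constructor
  · intro i hi
    rw [key]
    refine Finset.sum_eq_zero fun j hj => ?_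
    have hjm : j ≤ m := by
      by_contra hlt
      exact (Finsupp.mem_support_iff.1 hj) (hu j (by omega))
    simp only
    rw [(top_xpow hT j n t h).1 i (by omega), mul_zero]
  · rw [key, Finsupp.sum_eq_single m]
    · rw [(top_xpow hT m n t h).2]
    · intro j hj hjm
      have : j < m := by
        by_contra hlt
        exact hj (hu j (by omega))
      rw [(top_xpow hT j n t h).1 _ (by omega), mul_zero]
    · simp

theorem exists_deg (t : T) (ht : t ≠ 0) : ∃ n, DegLE hT n t ∧ P hT t n ≠ 0 := by
  have h0 : P hT t ≠ 0 := by simpa using ht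
  have hne : (P hT t).support.Nonempty := by simpa using h0
  refine ⟨(P hT t).support.max' hne, fun i hi => ?_, ?_⟩
  · by_contra h
    exact absurd ((P hT t).support.le_max' i (Finsupp.mem_support_iff.2 h)) (by omega)
  · exact Finsupp.mem_support_iff.1 ((P hT t).support.max'_mem hne)

theorem noZeroDivisors (hT : IsOreExtension k σ δ ι x) [NoZeroDivisors R] : NoZeroDivisors T where
  eq_zero_or_eq_zero_of_mul_eq_zero := by
    intro a b hab
    by_contra! hne
    obtain ⟨m, hm, hm'⟩ := exists_deg hT a hne.1
    obtain ⟨n, hn, hn'⟩ := exists_deg hT b hne.2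
    have := (top_mul hT m n a b hm hn).2
    rw [hab, map_zero, Finsupp.zero_apply] at this
    rcases mul_eq_zero.1 this.symm with h | h
    · exact hm' h
    · exact (map_ne_zero_iff _ (AlgEquiv.injective _)).2 hn' h

theorem top_pow [NoZeroDivisors R] [Nontrivial R] (n : ℕ) (u : T) (hu : DegLE hT n u)
    (hu' : P hT u n ≠ 0) (j : ℕ) :
    DegLE hT (n * j) (u ^ j) ∧ P hT (u ^ j) (n * j) ≠ 0 := by
  induction j with
  | zero =>
    rw [pow_zero, mul_zero, P_one]
    refine ⟨fun i hi => ?_, by simp⟩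
    rw [P_one, Finsupp.single_apply, if_neg (by omega)]
  | succ j ih =>
    have := top_mul hT (n * j) n (u ^ j) u ih.1 hu
    rw [pow_succ, mul_add, mul_one]
    refine ⟨this.1, ?_⟩
    rw [this.2]
    refine mul_ne_zero ih.2 ?_
    exact (map_ne_zero_iff _ (AlgEquiv.injective _)).2 hu'

/-- Change of variable `x ↦ x - c`. -/
theorem shift (hT : IsOreExtension k σ δ ι x) (c : k) : ∃ δ' : R →ₗ[k] R,
    IsOreExtension k σ δ' ι (x - algebraMap k T c) := by
  set y := x - algebraMap k T c with hy
  have hx : x = y + algebraMap k T c := by simp [hy]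
  refine ⟨δ + c • (σ.toLinearMap - LinearMap.id), ?_, hT.injective, ?_, ?_⟩
  · intro a b
    simp only [LinearMap.add_apply, LinearMap.smul_apply, LinearMap.sub_apply,
      AlgEquiv.toLinearMap_apply, LinearMap.id_apply, hT.isSigmaDerivation, map_mul, mul_add,
      add_mul, mul_sub, sub_mul, smul_sub, mul_smul_comm, smul_mul_assoc]
    abel
  · intro r
    simp only [hy, sub_mul, mul_sub, hT.rel, LinearMap.add_apply, LinearMap.smul_apply,
      LinearMap.sub_apply, AlgEquiv.toLinearMap_apply, LinearMap.id_apply, map_add, map_smul,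
      map_sub, smul_sub, ← Algebra.smul_def, ← Algebra.commutes c (ι (σ r))]
    abel
  · rw [free_iff]
    have hypow : ∀ i, DegLE hT i (y ^ i) ∧ P hT (y ^ i) i = 1 := by
      have hd : DegLE hT 1 y ∧ P hT y 1 = 1 := by
        have : P hT y = Finsupp.single 1 1 - Finsupp.single 0 (algebraMap k R c) := by
          rw [hy, map_sub, P_x, ← P_ι hT, AlgHom.commutes]
        constructor
        · intro i hi
          rw [this, Finsupp.sub_apply, Finsupp.single_apply, Finsupp.single_apply,
            if_neg (by omega), if_neg (by omega), sub_zero]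
        · rw [this]; simp
      intro i
      induction i with
      | zero =>
        rw [pow_zero, P_one]
        refine ⟨fun i hi => ?_, by simp⟩
        rw [P_one, Finsupp.single_apply, if_neg (by omega)]
      | succ j ih =>
        have := top_mul hT j 1 (y ^ j) y ih.1 hd.1
        rw [pow_succ]
        refine ⟨this.1, ?_⟩
        rw [this.2, ih.2, hd.2]
        simp
    constructor
    · rw [injective_iff_map_eq_zero]
      intro a ha
      by_contra hne
      have hs : a.support.Nonempty := by simpa using hne
      set n := a.support.max' hs
      have hn : a n ≠ 0 := Finsupp.mem_support_iff.1 (a.support.max'_mem hs)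
      apply hn
      have h1 : P hT (osum ι y a) n = a n := by
        rw [osum_apply, Finsupp.sum, map_sum, Finsupp.finsetSum_apply,
          Finset.sum_eq_single n]
        · rw [P_ι_mul, (hypow n).2, mul_one]
        · intro j hj hjn
          have : j ≤ n := a.support.le_max' j hj
          rw [P_ι_mul, (hypow j).1 n (by omega), mul_zero]
        · intro h
          simp [Finsupp.notMem_support_iff.1 h]
      rw [← h1, ha]
      simp
    · intro t
      change t ∈ LinearMap.range (osum ι y)
      induction t using ore_induction hT with
      | hadd a b ha hb => exact Submodule.add_mem _ ha hb
      | h i r =>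
        have hc : Commute y (algebraMap k T c) := Algebra.commute_algebraMap_right c y
        rw [hx, hc.add_pow, Finset.mul_sum]
        refine Submodule.sum_mem _ fun m _ => ?_
        refine ⟨Finsupp.single m (r * algebraMap k R (c ^ (i - m) * (i.choose m : k))), ?_⟩
        rw [osum_single, map_mul, AlgHom.commutes, map_mul, map_natCast, map_pow, mul_assoc,
          mul_assoc (y ^ m), ← map_pow, ← map_natCast (algebraMap k T), ← map_mul,
          Algebra.commutes]

end basics

end OreAux

namespace OreAux

section basechange
variable {k R T : Type*} [Field k] [Ring R] [Algebra k R] [Ring T] [Algebra k T]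
variable {σ : R ≃ₐ[k] R} {δ : R →ₗ[k] R} {ι : R →ₐ[k] T} {x : T}
variable (B : Type*) [Ring B] [Algebra k B]

/-- Coefficient map of `xⁱ`. -/
noncomputable def cf (hT : IsOreExtension k σ δ ι x) (i : ℕ) : T →ₗ[k] R :=
  (Finsupp.lapply i) ∘ₗ (P hT).toLinearMap

theorem cf_apply (hT : IsOreExtension k σ δ ι x) (i : ℕ) (t : T) : cf hT i t = P hT t i := rfl

/-- The base-changed embedding. -/
noncomputable abbrev bι (ι : R →ₐ[k] T) : B ⊗[k] R →ₐ[k] B ⊗[k] T :=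
  Algebra.TensorProduct.map (AlgHom.id k B) ι

theorem osum_base (hT : IsOreExtension k σ δ ι x) :
    osum (bι B ι) ((1 : B) ⊗ₜ[k] x) =
      ((TensorProduct.congr (LinearEquiv.refl k B) (P hT)).trans
        (TensorProduct.finsuppRight k k B R ℕ)).symm.toLinearMap := by
  apply Finsupp.lhom_ext
  intro i r
  rw [osum_single]
  induction r using TensorProduct.induction_on with
  | zero => simp
  | add a b ha hb => rw [map_add, add_mul, ha, hb, Finsupp.single_add, map_add]
  | tmul b r =>
    simp only [LinearEquiv.coe_coe, LinearEquiv.trans_symm, LinearEquiv.trans_apply,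
      TensorProduct.finsuppRight_symm_apply_single, Algebra.TensorProduct.map_tmul,
      AlgHom.id_apply, Algebra.TensorProduct.tmul_pow, one_pow,
      Algebra.TensorProduct.tmul_mul_tmul, mul_one, TensorProduct.congr_symm_tmul,
      LinearEquiv.refl_symm, LinearEquiv.refl_apply, P_symm, osum_single]

theorem base (hT : IsOreExtension k σ δ ι x) :
    IsOreExtension k (Algebra.TensorProduct.congr (AlgEquiv.refl : B ≃ₐ[k] B) σ)
      (TensorProduct.map LinearMap.id δ) (bι B ι) ((1 : B) ⊗ₜ[k] x) where
  isSigmaDerivation a b := by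
    induction a using TensorProduct.induction_on with
    | zero => simp
    | add a a' ha hb => rw [add_mul, map_add, ha, hb, map_add, map_add]; simp only [add_mul]; abel
    | tmul a r =>
      induction b using TensorProduct.induction_on with
      | zero => simp
      | add a a' ha hb => rw [mul_add, map_add, ha, hb, map_add]; simp only [mul_add]; abel
      | tmul b s => simp [hT.isSigmaDerivation, TensorProduct.tmul_add]
  injective := by
    have := Module.Flat.lTensor_preserves_injective_linearMap (M := B) ι.toLinearMap hT.injective
    exact this
  rel a := by
    induction a using TensorProduct.induction_on with
    | zero => simp
    | add a a' ha hb => simp only [mul_add, map_add, ha, hb, add_mul]; abel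
    | tmul a r => simp [hT.rel, TensorProduct.tmul_add]
  free := by
    rw [free_iff, osum_base B hT]
    exact LinearEquiv.bijective _

theorem P_base (hT : IsOreExtension k σ δ ι x) (u : B ⊗[k] T) (i : ℕ) :
    P (base B hT) u i = TensorProduct.map LinearMap.id (cf hT i) u := by
  have h : P (base B hT) u = ((TensorProduct.congr (LinearEquiv.refl k B) (P hT)).trans
        (TensorProduct.finsuppRight k k B R ℕ)) u := by
    rw [← LinearEquiv.eq_symm_apply, P_symm, osum_base B hT]
    simp
  rw [h]
  induction u using TensorProduct.induction_on with
  | zero => simp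
  | add a b ha hb =>
    rw [map_add, map_add, Finsupp.add_apply, ha ?_, hb ?_]
    · rw [← LinearEquiv.eq_symm_apply, P_symm, osum_base B hT]
      simp
    · rw [← LinearEquiv.eq_symm_apply, P_symm, osum_base B hT]
      simp
  | tmul b t =>
    simp [TensorProduct.finsuppRight_apply_tmul_apply, cf_apply]

end basechange

section degree
variable {k R T : Type*} [Field k] [Ring R] [Algebra k R] [Ring T] [Algebra k T]
variable {σ : R ≃ₐ[k] R} {δ : R →ₗ[k] R} {ι : R →ₐ[k] T} {x : T}

theorem exists_functional {M N : Type*} [AddCommGroup M] [Module k M] [AddCommGroup N]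
    [Module k N] (c : M ⊗[k] N) (hc : c ≠ 0) :
    ∃ f : M →ₗ[k] k, TensorProduct.lid k N (TensorProduct.map f LinearMap.id c) ≠ 0 := by
  classical
  by_contra! h
  apply hc
  let b := Module.Basis.ofVectorSpace k M
  apply (TensorProduct.equivFinsuppOfBasisLeft (N := N) b).injective
  ext i
  rw [TensorProduct.equivFinsuppOfBasisLeft_apply]
  simpa [LinearMap.rTensor] using h (b.coord i)

theorem slice_comul (D : T →ₗ[k] T ⊗[k] T)
    (hco : ∀ t : T, TensorProduct.map D LinearMap.id (D t) =
      (TensorProduct.assoc k T T T).symm (TensorProduct.map LinearMap.id D (D t)))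
    (f : T →ₗ[k] k) (t : T) :
    D (TensorProduct.lid k T (TensorProduct.map f LinearMap.id (D t))) =
      TensorProduct.map ((TensorProduct.lid k T).toLinearMap ∘ₗ
        TensorProduct.map f LinearMap.id ∘ₗ D) LinearMap.id (D t) := by
  have h1 : ∀ (a : T) (w : T ⊗[k] T),
      TensorProduct.map ((TensorProduct.lid k T).toLinearMap ∘ₗ
        TensorProduct.map f LinearMap.id) LinearMap.id
        ((TensorProduct.assoc k T T T).symm (a ⊗ₜ w)) = f a • w := by
    intro a w
    induction w using TensorProduct.induction_on with
    | zero => simp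
    | add u v hu hv => rw [TensorProduct.tmul_add, map_add, map_add, hu, hv, smul_add]
    | tmul u v => simp [TensorProduct.smul_tmul']
  have h2 : ∀ z : T ⊗[k] T, TensorProduct.map ((TensorProduct.lid k T).toLinearMap ∘ₗ
        TensorProduct.map f LinearMap.id) LinearMap.id
        ((TensorProduct.assoc k T T T).symm (TensorProduct.map LinearMap.id D z)) =
      D (TensorProduct.lid k T (TensorProduct.map f LinearMap.id z)) := by
    intro z
    induction z using TensorProduct.induction_on with
    | zero => simp
    | add u v hu hv => simp only [map_add, hu, hv]
    | tmul u v => rw [TensorProduct.map_tmul, h1]; simp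
  rw [← h2, ← hco, ← LinearMap.comp_apply, ← TensorProduct.map_comp]
  rfl

theorem slice_mid (D : T →ₗ[k] T ⊗[k] T)
    (hco : ∀ t : T, TensorProduct.map D LinearMap.id (D t) =
      (TensorProduct.assoc k T T T).symm (TensorProduct.map LinearMap.id D (D t)))
    (f : T →ₗ[k] k) (t : T) :
    TensorProduct.map ((TensorProduct.rid k T).toLinearMap ∘ₗ
        TensorProduct.map LinearMap.id f ∘ₗ D) LinearMap.id (D t) =
    TensorProduct.map LinearMap.id ((TensorProduct.lid k T).toLinearMap ∘ₗ
        TensorProduct.map f LinearMap.id ∘ₗ D) (D t) := by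
  have h1 : ∀ (a : T) (w : T ⊗[k] T),
      TensorProduct.map ((TensorProduct.rid k T).toLinearMap ∘ₗ
        TensorProduct.map LinearMap.id f) LinearMap.id
        ((TensorProduct.assoc k T T T).symm (a ⊗ₜ w)) =
        a ⊗ₜ (TensorProduct.lid k T (TensorProduct.map f LinearMap.id w)) := by
    intro a w
    induction w using TensorProduct.induction_on with
    | zero => simp
    | add u v hu hv => 
      rw [TensorProduct.tmul_add, map_add, map_add, hu, hv, map_add, map_add,
        TensorProduct.tmul_add]
    | tmul u v => simp [TensorProduct.smul_tmul]
  have h2 : ∀ z : T ⊗[k] T, TensorProduct.map ((TensorProduct.rid k T).toLinearMap ∘ₗ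
        TensorProduct.map LinearMap.id f) LinearMap.id
        ((TensorProduct.assoc k T T T).symm (TensorProduct.map LinearMap.id D z)) =
      TensorProduct.map LinearMap.id ((TensorProduct.lid k T).toLinearMap ∘ₗ
        TensorProduct.map f LinearMap.id ∘ₗ D) z := by
    intro z
    induction z using TensorProduct.induction_on with
    | zero => simp
    | add u v hu hv => simp only [map_add, hu, hv]
    | tmul u v => rw [TensorProduct.map_tmul, h1]; simp
  rw [← h2, ← hco, ← LinearMap.comp_apply (f := TensorProduct.map _ _) (g := TensorProduct.map D _),
    ← TensorProduct.map_comp]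
  rfl

theorem degree_le (hT : IsOreExtension k σ δ ι x) [IsDomain (R ⊗[k] R)]
    (D : T →ₗ[k] T ⊗[k] T) (h1 : D 1 = 1) (hmul : ∀ a b, D (a * b) = D a * D b)
    (hco : ∀ t : T, TensorProduct.map D LinearMap.id (D t) =
      (TensorProduct.assoc k T T T).symm (TensorProduct.map LinearMap.id D (D t)))
    (DR : R →ₗ[k] R ⊗[k] R) (hDR : Function.Injective DR)
    (hD : ∀ r, D (ι r) = TensorProduct.map ι.toLinearMap ι.toLinearMap (DR r))
    (i : ℕ) (hi : 2 ≤ i) : TensorProduct.map LinearMap.id (cf hT i) (D x) = 0 := by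
  have dRT : NoZeroDivisors (R ⊗[k] T) := noZeroDivisors (base R hT)
  have dTR : NoZeroDivisors (T ⊗[k] R) :=
    (Algebra.TensorProduct.comm k T R).injective.noZeroDivisors _ (map_zero _) (map_mul _)
  have nRR : Nontrivial (R ⊗[k] R) := inferInstance
  have hιι : Function.Injective (TensorProduct.map ι.toLinearMap (LinearMap.id (R := k) (M := R))) :=
    Module.Flat.rTensor_preserves_injective_linearMap (M := R) ι.toLinearMap hT.injective
  have nTR : Nontrivial (T ⊗[k] R) := hιι.nontrivial
  let hB := base T hT
  by_cases hu0 : D x = 0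
  · simp [hu0]
  obtain ⟨n, hn, hn'⟩ := exists_deg hB (D x) hu0
  by_cases hn2 : n < 2
  · rw [← P_base T hT]; exact hn i (by omega)
  exfalso
  obtain ⟨f, hf⟩ := exists_functional _ hn'
  set t : T := TensorProduct.lid k T (TensorProduct.map f LinearMap.id (D x)) with ht
  have hPt : ∀ j, P hT t j =
      TensorProduct.lid k R (TensorProduct.map f LinearMap.id (P hB (D x) j)) := by
    intro j
    rw [P_base T hT, ht]
    generalize D x = z
    induction z using TensorProduct.induction_on with
    | zero => simp
    | add u v hu hv => simp only [map_add, Finsupp.add_apply, hu, hv]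
    | tmul u v => simp [cf_apply]
  have htn : P hT t n ≠ 0 := by rw [hPt]; exact hf
  have htd : DegLE hT n t := fun j hj => by rw [hPt, hn j hj]; simp
  -- upper bound
  have hup : P hB (D t) (n * n) = 0 := by
    rw [ht, slice_comul D hco f x, P_base T hT, ← LinearMap.comp_apply, ← TensorProduct.map_comp]
    have := hn (n * n) (by nlinarith)
    rw [P_base T hT] at this
    rw [LinearMap.comp_id, LinearMap.id_comp]
    have e : TensorProduct.map ((TensorProduct.lid k T).toLinearMap ∘ₗ
        TensorProduct.map f LinearMap.id ∘ₗ D) (cf hT (n * n)) =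
        TensorProduct.map ((TensorProduct.lid k T).toLinearMap ∘ₗ
        TensorProduct.map f LinearMap.id ∘ₗ D) LinearMap.id ∘ₗ
        TensorProduct.map LinearMap.id (cf hT (n * n)) := by
      rw [← TensorProduct.map_comp, LinearMap.comp_id, LinearMap.id_comp]
    rw [e, LinearMap.comp_apply, this, map_zero]
  -- computation of the leading coefficient
  have hDpow : ∀ j, D (x ^ j) = D x ^ j := by
    intro j
    induction j with
    | zero => simpa using h1
    | succ j ih => rw [pow_succ, hmul, ih, pow_succ]
  have hDι : ∀ r, D (ι r) = bι T ι (TensorProduct.map ι.toLinearMap LinearMap.id (DR r)) := by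
    intro r
    rw [hD]
    generalize DR r = z
    induction z using TensorProduct.induction_on with
    | zero => simp
    | add u v hu hv => simp only [map_add, hu, hv]
    | tmul u v => simp
  have hlow : P hB (D t) (n * n) =
      TensorProduct.map ι.toLinearMap LinearMap.id (DR (P hT t n)) * P hB (D x ^ n) (n * n) := by
    conv_lhs => rw [← (P hT).symm_apply_apply t, P_symm, osum_apply]
    rw [Finsupp.sum, map_sum, map_sum, Finsupp.finsetSum_apply, Finset.sum_eq_single n]
    · rw [hmul, hDι, hDpow, P_ι_mul]
    · intro j hj hjn
      have hlt : j < n := by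
        by_contra hlt
        exact Finsupp.mem_support_iff.1 hj (htd j (by omega))
      rw [hmul, hDι, hDpow, P_ι_mul, (top_pow hB n _ hn hn' j).1 (n * n) (by nlinarith), mul_zero]
    · intro h
      exact absurd (Finsupp.notMem_support_iff.1 h) htn
  rw [hup] at hlow
  rcases mul_eq_zero.1 hlow.symm with h | h
  · rw [← map_zero (TensorProduct.map ι.toLinearMap (LinearMap.id (R := k) (M := R)))] at h
    have := hιι h
    rw [← map_zero DR] at this
    exact htn (hDR this)
  · exact (top_pow hB n _ hn hn' n).2 h

end degree
end OreAux

namespace OreAux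

section decomposition
variable {k R T : Type*} [Field k] [Ring R] [Algebra k R] [Ring T] [Algebra k T]
variable {σ : R ≃ₐ[k] R} {δ : R →ₗ[k] R} {ι : R →ₐ[k] T} {x : T}

theorem coop_coassoc (D : T →ₗ[k] T ⊗[k] T)
    (hco : ∀ t : T, TensorProduct.map D LinearMap.id (D t) =
      (TensorProduct.assoc k T T T).symm (TensorProduct.map LinearMap.id D (D t)))
    (D' : T →ₗ[k] T ⊗[k] T) (hD' : D' = (TensorProduct.comm k T T).toLinearMap ∘ₗ D) (t : T) :
    TensorProduct.map D' LinearMap.id (D' t) =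
      (TensorProduct.assoc k T T T).symm (TensorProduct.map LinearMap.id D' (D' t)) := by
  have hD'a : ∀ t, D' t = TensorProduct.comm k T T (D t) := by intro t; rw [hD']; rfl
  let ρ : (T ⊗[k] T) ⊗[k] T →ₗ[k] T ⊗[k] (T ⊗[k] T) :=
    (TensorProduct.comm k (T ⊗[k] T) T).toLinearMap ∘ₗ
      TensorProduct.map (TensorProduct.comm k T T).toLinearMap LinearMap.id
  have hA : ∀ z : T ⊗[k] T, TensorProduct.map LinearMap.id D' (TensorProduct.comm k T T z) =
      ρ (TensorProduct.map D LinearMap.id z) := by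
    intro z
    induction z using TensorProduct.induction_on with
    | zero => simp
    | add u v hu hv => simp only [map_add, hu, hv]
    | tmul u v => simp [ρ, hD'a]
  have hB0 : ∀ (a : T) (w : T ⊗[k] T), (TensorProduct.comm k T T w) ⊗ₜ[k] a =
      (TensorProduct.assoc k T T T).symm (ρ ((TensorProduct.assoc k T T T).symm (a ⊗ₜ w))) := by
    intro a w
    induction w using TensorProduct.induction_on with
    | zero => simp
    | add u v hu hv => simp only [map_add, TensorProduct.add_tmul, TensorProduct.tmul_add, hu, hv]
    | tmul u v => simp [ρ]
  have hB : ∀ z : T ⊗[k] T, TensorProduct.map D' LinearMap.id (TensorProduct.comm k T T z) =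
      (TensorProduct.assoc k T T T).symm (ρ ((TensorProduct.assoc k T T T).symm
        (TensorProduct.map LinearMap.id D z))) := by
    intro z
    induction z using TensorProduct.induction_on with
    | zero => simp
    | add u v hu hv => simp only [map_add, hu, hv]
    | tmul u v => rw [TensorProduct.map_tmul, ← hB0]; simp [hD'a]
  rw [hD'a, hA, hB, hco]

/-- The projection to the component of degree `j`. -/
noncomputable def q (hT : IsOreExtension k σ δ ι x) (j : ℕ) : T →ₗ[k] T :=
  (LinearMap.mulRight k (x ^ j)) ∘ₗ ι.toLinearMap ∘ₗ cf hT j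

theorem q_apply (hT : IsOreExtension k σ δ ι x) (j : ℕ) (t : T) :
    q hT j t = ι (cf hT j t) * x ^ j := rfl

theorem dec1 (hT : IsOreExtension k σ δ ι x) (u : T ⊗[k] T)
    (hu : ∀ j, 2 ≤ j → TensorProduct.map LinearMap.id (cf hT j) u = 0) :
    TensorProduct.map LinearMap.id (q hT 0 + q hT 1) u = u := by
  have h1 : ∀ j, bι T ι (P (base T hT) u j) * ((1 : T) ⊗ₜ[k] x) ^ j =
      TensorProduct.map LinearMap.id (q hT j) u := by
    intro j
    rw [P_base T hT]
    clear hu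
    induction u using TensorProduct.induction_on with
    | zero => simp
    | add a b ha hb => simp only [map_add, add_mul, ha, hb]
    | tmul a b => simp [q_apply]
  conv_rhs => rw [← (P (base T hT)).symm_apply_apply u, P_symm, osum_apply]
  rw [Finsupp.sum_of_support_subset (s := Finset.range 2) (P (base T hT) u)]
  · rw [Finset.sum_range_succ, Finset.sum_range_one, h1, h1, TensorProduct.map_add_right]
    rfl
  · intro j hj
    rw [Finset.mem_range]
    by_contra hlt
    exact Finsupp.mem_support_iff.1 hj (by rw [P_base T hT]; exact hu j (by omega))
  · simp

theorem comm_map (f g : T →ₗ[k] T) (u : T ⊗[k] T) :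
    TensorProduct.map f g (TensorProduct.comm k T T u) =
      TensorProduct.comm k T T (TensorProduct.map g f u) := by
  induction u using TensorProduct.induction_on with
  | zero => simp
  | add a b ha hb => simp only [map_add, ha, hb]
  | tmul a b => simp

theorem map_q (hT : IsOreExtension k σ δ ι x) (i j : ℕ) (u : T ⊗[k] T) :
    TensorProduct.map (q hT i) (q hT j) u =
      TensorProduct.map ι.toLinearMap ι.toLinearMap
        (TensorProduct.map (cf hT i) (cf hT j) u) * ((x ^ i) ⊗ₜ[k] (x ^ j)) := by
  induction u using TensorProduct.induction_on with
  | zero => simp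
  | add a b ha hb => simp only [map_add, add_mul, ha, hb]
  | tmul a b => simp [q_apply]

theorem dec (hT : IsOreExtension k σ δ ι x) (u : T ⊗[k] T)
    (hu : ∀ j, 2 ≤ j → TensorProduct.map LinearMap.id (cf hT j) u = 0)
    (hu' : ∀ j, 2 ≤ j →
      TensorProduct.map LinearMap.id (cf hT j) (TensorProduct.comm k T T u) = 0) :
    ∃ s t v w : R ⊗[k] R, u =
      TensorProduct.map ι.toLinearMap ι.toLinearMap s * ((1 : T) ⊗ₜ[k] x)
      + TensorProduct.map ι.toLinearMap ι.toLinearMap t * (x ⊗ₜ[k] (1 : T))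
      + TensorProduct.map ι.toLinearMap ι.toLinearMap v * (x ⊗ₜ[k] x)
      + TensorProduct.map ι.toLinearMap ι.toLinearMap w := by
  have h1 := dec1 hT u hu
  have h2 := dec1 hT _ hu'
  rw [comm_map] at h2
  have h2 := (TensorProduct.comm k T T).injective h2
  have h3 : u = TensorProduct.map (q hT 0 + q hT 1) (q hT 0 + q hT 1) u := by
    conv_lhs => rw [← h2, ← h1]
    rw [← LinearMap.comp_apply (f := TensorProduct.map _ _) (g := TensorProduct.map _ _),
      ← TensorProduct.map_comp, LinearMap.comp_id, LinearMap.id_comp]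
  refine ⟨TensorProduct.map (cf hT 0) (cf hT 1) u, TensorProduct.map (cf hT 1) (cf hT 0) u,
    TensorProduct.map (cf hT 1) (cf hT 1) u, TensorProduct.map (cf hT 0) (cf hT 0) u, ?_⟩
  have e01 := map_q hT 0 1 u
  have e10 := map_q hT 1 0 u
  have e11 := map_q hT 1 1 u
  have e00 := map_q hT 0 0 u
  rw [pow_zero, ← Algebra.TensorProduct.one_def, mul_one] at e00
  rw [pow_zero, pow_one] at e01 e10
  rw [pow_one] at e11
  rw [← e01, ← e10, ← e11, ← e00]
  conv_lhs => rw [h3]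
  simp only [TensorProduct.map_add_left, TensorProduct.map_add_right, LinearMap.add_apply]
  abel

theorem cf_M_mul (hT : IsOreExtension k σ δ ι x) (i j : ℕ) (s : R ⊗[k] R) (u : T ⊗[k] T) :
    TensorProduct.map (cf hT i) (cf hT j)
      (TensorProduct.map ι.toLinearMap ι.toLinearMap s * u) =
      s * TensorProduct.map (cf hT i) (cf hT j) u := by
  induction s using TensorProduct.induction_on with
  | zero => simp
  | add a b ha hb => simp only [map_add, add_mul, ha, hb]
  | tmul a b =>
    induction u using TensorProduct.induction_on with
    | zero => simp
    | add a b ha hb => simp only [map_add, mul_add, ha, hb]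
    | tmul c d => simp [cf_apply, P_ι_mul]

/-- If `L, N` are left `R`-linear then so is `L ⊗ N`. -/
theorem lin_M_mul (L N : T →ₗ[k] T) (hL : ∀ r t, L (ι r * t) = ι r * L t)
    (hN : ∀ r t, N (ι r * t) = ι r * N t) (s : R ⊗[k] R) (u : T ⊗[k] T) :
    TensorProduct.map L N (TensorProduct.map ι.toLinearMap ι.toLinearMap s * u) =
      TensorProduct.map ι.toLinearMap ι.toLinearMap s * TensorProduct.map L N u := by
  induction s using TensorProduct.induction_on with
  | zero => simp
  | add a b ha hb => simp only [map_add, add_mul, ha, hb]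
  | tmul a b =>
    induction u using TensorProduct.induction_on with
    | zero => simp
    | add a b ha hb => simp only [map_add, mul_add, ha, hb]
    | tmul c d => simp [hL, hN]

theorem rid_M_mul (β : T →ₗ[k] k) (ε : R →ₗ[k] k) (hβ : ∀ r t, β (ι r * t) = ε r * β t)
    (s : R ⊗[k] R) (u : T ⊗[k] T) :
    TensorProduct.rid k T (TensorProduct.map LinearMap.id β
      (TensorProduct.map ι.toLinearMap ι.toLinearMap s * u)) =
    ι (TensorProduct.rid k R (TensorProduct.map LinearMap.id ε s)) *
      TensorProduct.rid k T (TensorProduct.map LinearMap.id β u) := by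
  induction s using TensorProduct.induction_on with
  | zero => simp
  | add a b ha hb => simp only [map_add, add_mul, ha, hb]
  | tmul a b =>
    induction u using TensorProduct.induction_on with
    | zero => simp
    | add a b ha hb => simp only [map_add, mul_add, ha, hb]
    | tmul c d => simp [hβ, smul_smul, mul_comm]

theorem lid_M_mul (β : T →ₗ[k] k) (ε : R →ₗ[k] k) (hβ : ∀ r t, β (ι r * t) = ε r * β t)
    (s : R ⊗[k] R) (u : T ⊗[k] T) :
    TensorProduct.lid k T (TensorProduct.map β LinearMap.id
      (TensorProduct.map ι.toLinearMap ι.toLinearMap s * u)) =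
    ι (TensorProduct.lid k R (TensorProduct.map ε LinearMap.id s)) *
      TensorProduct.lid k T (TensorProduct.map β LinearMap.id u) := by
  induction s using TensorProduct.induction_on with
  | zero => simp
  | add a b ha hb => simp only [map_add, add_mul, ha, hb]
  | tmul a b =>
    induction u using TensorProduct.induction_on with
    | zero => simp
    | add a b ha hb => simp only [map_add, mul_add, ha, hb]
    | tmul c d => simp [hβ, smul_smul, mul_comm]

theorem M_mul (a b : R ⊗[k] R) :
    TensorProduct.map ι.toLinearMap ι.toLinearMap (a * b) =
      TensorProduct.map ι.toLinearMap ι.toLinearMap a *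
      TensorProduct.map ι.toLinearMap ι.toLinearMap b :=
  map_mul (Algebra.TensorProduct.map ι ι) a b

theorem mul'_right (S : T →ₗ[k] T) (u : T ⊗[k] T) (X : T) :
    LinearMap.mul' k T (TensorProduct.map S LinearMap.id (u * ((1 : T) ⊗ₜ[k] X))) =
      LinearMap.mul' k T (TensorProduct.map S LinearMap.id u) * X := by
  induction u using TensorProduct.induction_on with
  | zero => simp
  | add a b ha hb => simp only [map_add, add_mul, ha, hb]
  | tmul a b => simp [mul_assoc]

/-- `g + λ x` with `λ ≠ 0` does not divide a nonzero scalar. -/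
theorem not_left_inv (hT : IsOreExtension k σ δ ι x) [Nontrivial R] (g : R) (c : k) (hc : c ≠ 0)
    (U : T) (h : U * (ι g + c • x) = algebraMap k T c) : False := by
  have hU : U ≠ 0 := by
    rintro rfl
    have h2 : P hT (ι (algebraMap k R c)) 0 = 0 := by
      rw [AlgHom.commutes, ← h, zero_mul, map_zero (P hT), Finsupp.zero_apply]
    rw [P_ι, Finsupp.single_eq_same] at h2
    exact hc ((map_eq_zero (algebraMap k R)).1 h2)
  obtain ⟨p, hp, hp'⟩ := exists_deg hT U hU
  have hX : P hT (ι g + c • x) = Finsupp.single 0 g + c • Finsupp.single 1 1 := by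
    rw [map_add, map_smul, P_ι, P_x]
  have hd : DegLE hT 1 (ι g + c • x) := by
    intro i hi
    rw [hX, Finsupp.add_apply, Finsupp.smul_apply, Finsupp.single_apply, Finsupp.single_apply,
      if_neg (by omega), if_neg (by omega), smul_zero, add_zero]
  have h1 := (top_mul hT p 1 U _ hp hd).2
  rw [h, hX, ← AlgHom.commutes ι, P_ι] at h1
  simp only [Finsupp.add_apply, Finsupp.smul_apply, Finsupp.single_apply] at h1
  rw [if_neg (by omega), if_neg (by omega), if_pos trivial, zero_add, map_smul, map_one,
    mul_smul_comm, mul_one] at h1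
  exact (smul_ne_zero hc hp') h1.symm

end decomposition

end OreAux

namespace OreAux

section vanishing
variable {k R T : Type*} [Field k] [Ring R] [HopfAlgebra k R] [IsDomain (R ⊗[k] R)]
  [Ring T] [Algebra k T]
variable {σ : R ≃ₐ[k] R} {δ : R →ₗ[k] R} {ι : R →ₐ[k] T} {x : T}

theorem v_zero (hT : IsOreExtension k σ δ ι x)
    (H : HopfAlgebraStructure k T) (hH : ExtendsHopf k ι H) (hε : H.counit x = 0)
    (s t v w : R ⊗[k] R)
    (hx : H.comul x =
      TensorProduct.map ι.toLinearMap ι.toLinearMap s * ((1 : T) ⊗ₜ[k] x)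
      + TensorProduct.map ι.toLinearMap ι.toLinearMap t * (x ⊗ₜ[k] (1 : T))
      + TensorProduct.map ι.toLinearMap ι.toLinearMap v * (x ⊗ₜ[k] x)
      + TensorProduct.map ι.toLinearMap ι.toLinearMap w) : v = 0 := by
  by_contra hv
  have nR : Nontrivial R := by
    by_contra h
    rw [not_nontrivial_iff_subsingleton] at h
    apply one_ne_zero (α := R ⊗[k] R)
    rw [Algebra.TensorProduct.one_def, Subsingleton.elim (1 : R) 0, TensorProduct.zero_tmul]
  have hx' : H.comul x =
      TensorProduct.map ι.toLinearMap ι.toLinearMap s * ((1 : T) ⊗ₜ[k] x)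
      + TensorProduct.map ι.toLinearMap ι.toLinearMap t * (x ⊗ₜ[k] (1 : T))
      + TensorProduct.map ι.toLinearMap ι.toLinearMap v * (x ⊗ₜ[k] x)
      + TensorProduct.map ι.toLinearMap ι.toLinearMap w * ((1 : T) ⊗ₜ[k] (1 : T)) := by
    rw [hx, ← Algebra.TensorProduct.one_def, mul_one]
  obtain ⟨hH1, hH2, -⟩ := hH
  let ε : R →ₗ[k] k := Coalgebra.counit
  have hε_mul : ∀ a b, ε (a * b) = ε a * ε b := fun a b => Bialgebra.counit_mul a b
  have hε_one : ε 1 = 1 := Bialgebra.counit_one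
  let β : T →ₗ[k] k := ε ∘ₗ cf hT 1
  have hβ : ∀ r t, β (ι r * t) = ε r * β t := by
    intro r t
    simp only [β, LinearMap.comp_apply, cf_apply, P_ι_mul, hε_mul]
  have hβ1 : β 1 = 0 := by simp [β, cf_apply, P_one]
  have hβx : β x = 1 := by simp [β, cf_apply, P_x, hε_one]
  obtain ⟨L, hLdef⟩ : ∃ L : T →ₗ[k] T, L = (TensorProduct.rid k T).toLinearMap ∘ₗ
        TensorProduct.map LinearMap.id β ∘ₗ H.comul := ⟨_, rfl⟩
  obtain ⟨N, hNdef⟩ : ∃ N : T →ₗ[k] T, N = (TensorProduct.lid k T).toLinearMap ∘ₗ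
        TensorProduct.map β LinearMap.id ∘ₗ H.comul := ⟨_, rfl⟩
  have hLa : ∀ a, L a = TensorProduct.rid k T (TensorProduct.map LinearMap.id β (H.comul a)) := by
    intro a; rw [hLdef]; rfl
  have hNa : ∀ a, N a = TensorProduct.lid k T (TensorProduct.map β LinearMap.id (H.comul a)) := by
    intro a; rw [hNdef]; rfl
  have hL : ∀ r t, L (ι r * t) = ι r * L t := by
    intro r t
    rw [hLa, H.comul_mul, hH2, rid_M_mul β ε hβ, ← hLa]
    have := Coalgebra.lTensor_counit_comul (R := k) r
    change TensorProduct.map LinearMap.id ε (Coalgebra.comul r) = _ at this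
    rw [this]
    simp
  have hN : ∀ r t, N (ι r * t) = ι r * N t := by
    intro r t
    rw [hNa, H.comul_mul, hH2, lid_M_mul β ε hβ, ← hNa]
    have := Coalgebra.rTensor_counit_comul (R := k) r
    change TensorProduct.map ε LinearMap.id (Coalgebra.comul r) = _ at this
    rw [this]
    simp
  have hL1 : L 1 = 0 := by
    rw [hLa, H.comul_one, Algebra.TensorProduct.one_def]
    simp [hβ1]
  have hN1 : N 1 = 0 := by
    rw [hNa, H.comul_one, Algebra.TensorProduct.one_def]
    simp [hβ1]
  obtain ⟨f, hf⟩ : ∃ f : R, f = TensorProduct.rid k R (TensorProduct.map LinearMap.id ε s) :=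
    ⟨_, rfl⟩
  obtain ⟨g, hg⟩ : ∃ g : R, g = TensorProduct.lid k R (TensorProduct.map ε LinearMap.id t) :=
    ⟨_, rfl⟩
  obtain ⟨e', he'⟩ : ∃ e : R, e = TensorProduct.rid k R (TensorProduct.map LinearMap.id ε v) :=
    ⟨_, rfl⟩
  obtain ⟨e, he⟩ : ∃ e : R, e = TensorProduct.lid k R (TensorProduct.map ε LinearMap.id v) :=
    ⟨_, rfl⟩
  have hLx : L x = ι f + ι e' * x := by
    rw [hLa, hx']
    simp only [map_add, rid_M_mul β ε hβ, TensorProduct.map_tmul, LinearMap.id_apply, hβ1, hβx,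
      TensorProduct.rid_tmul, one_smul, zero_smul, mul_one, mul_zero, add_zero]
    rw [hf, he']
  have hNx : N x = ι g + ι e * x := by
    rw [hNa, hx']
    simp only [map_add, lid_M_mul β ε hβ, TensorProduct.map_tmul, LinearMap.id_apply, hβ1, hβx,
      TensorProduct.lid_tmul, one_smul, zero_smul, mul_one, mul_zero, add_zero, zero_add]
    rw [hg, he]
  have hεL : H.counit (L x) = 1 := by
    have : ∀ z : T ⊗[k] T, H.counit (TensorProduct.rid k T (TensorProduct.map LinearMap.id β z)) =
        β (TensorProduct.lid k T (TensorProduct.map H.counit LinearMap.id z)) := by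
      intro z
      induction z using TensorProduct.induction_on with
      | zero => simp
      | add a b ha hb => simp only [map_add, ha, hb]
      | tmul a b => simp [mul_comm]
    rw [hLa, this, H.counit_comul, hβx]
  have hεN : H.counit (N x) = 1 := by
    have : ∀ z : T ⊗[k] T, H.counit (TensorProduct.lid k T (TensorProduct.map β LinearMap.id z)) =
        β (TensorProduct.rid k T (TensorProduct.map LinearMap.id H.counit z)) := by
      intro z
      induction z using TensorProduct.induction_on with
      | zero => simp
      | add a b ha hb => simp only [map_add, ha, hb]
      | tmul a b => simp [mul_comm]
    rw [hNa, this, H.comul_counit, hβx]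
  have hεf : ε f = 1 := by
    rw [hLx, map_add, H.counit_mul, hε, mul_zero, add_zero, hH1] at hεL
    exact hεL
  -- first consequence of coassociativity
  have E1 := slice_mid H.comul H.coassoc β x
  rw [← hLdef, ← hNdef, hx'] at E1
  simp only [map_add, lin_M_mul L LinearMap.id hL (fun _ _ => rfl),
    lin_M_mul LinearMap.id N (fun _ _ => rfl) hN, TensorProduct.map_tmul, LinearMap.id_apply,
    hL1, hN1, TensorProduct.zero_tmul, TensorProduct.tmul_zero, mul_zero, add_zero, zero_add,
    hLx, hNx] at E1
  have c0 : ∀ a b : R, P hT (ι a + ι b * x) 0 = a := by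
    intro a b
    rw [map_add, Finsupp.add_apply, P_ι_mul, P_ι, P_x]; simp
  have c1 : ∀ a b : R, P hT (ι a + ι b * x) 1 = b := by
    intro a b
    rw [map_add, Finsupp.add_apply, P_ι_mul, P_ι, P_x]; simp
  have Q := fun i j => congrArg (TensorProduct.map (cf hT i) (cf hT j)) E1
  simp only [map_add (TensorProduct.map _ _), cf_M_mul, TensorProduct.map_tmul] at Q
  have px0 : P hT x 0 = 0 := by rw [P_x]; simp
  have px1 : P hT x 1 = 1 := by rw [P_x]; simp
  have po0 : P hT 1 0 = 1 := by rw [P_one]; simp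
  have po1 : P hT 1 1 = 0 := by rw [P_one]; simp
  have Q11 := Q 1 1
  have Q01 := Q 0 1
  have Q10 := Q 1 0
  simp only [cf_apply, c0, c1, px0, px1, po0, po1, TensorProduct.zero_tmul,
    TensorProduct.tmul_zero, mul_zero, add_zero, zero_add] at Q11 Q01 Q10
  -- `e` and `e'` are the same scalar
  have hee := mul_left_cancel₀ hv Q11
  have he1 : e = algebraMap k R (ε e') := by
    have := congrArg (fun z => TensorProduct.lid k R (TensorProduct.map ε LinearMap.id z)) hee
    simp only [TensorProduct.map_tmul, LinearMap.id_apply, TensorProduct.lid_tmul, hε_one,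
      one_smul] at this
    rw [← this, Algebra.algebraMap_eq_smul_one]
  have he2 : e' = algebraMap k R (ε e) := by
    have := congrArg (fun z => TensorProduct.rid k R (TensorProduct.map LinearMap.id ε z)) hee
    simp only [TensorProduct.map_tmul, LinearMap.id_apply, TensorProduct.rid_tmul, hε_one,
      one_smul] at this
    rw [this, Algebra.algebraMap_eq_smul_one]
  obtain ⟨c, hc⟩ : ∃ c, c = ε e := ⟨_, rfl⟩
  have hεalg : ∀ c : k, ε (algebraMap k R c) = c := by
    intro c
    rw [Algebra.algebraMap_eq_smul_one, map_smul, hε_one, smul_eq_mul, mul_one]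
  rw [← hc] at he2
  have he3 : e = algebraMap k R c := by rw [he1, he2, hεalg]
  have hc0 : c ≠ 0 := by
    intro h
    rw [he3, h, map_zero, TensorProduct.tmul_zero, mul_zero] at Q01
    rcases mul_eq_zero.1 Q01 with h' | h'
    · exact hv h'
    · have := congrArg (fun z => TensorProduct.rid k R (TensorProduct.map LinearMap.id ε z)) h'
      simp only [TensorProduct.map_tmul, LinearMap.id_apply, TensorProduct.rid_tmul, hε_one,
        one_smul, map_zero] at this
      rw [this, map_zero] at hεf
      exact zero_ne_one hεf
  -- second consequence of coassociativity
  have E2 := slice_comul H.comul H.coassoc β x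
  rw [← hNdef, ← hNa, hx'] at E2
  simp only [map_add, lin_M_mul N LinearMap.id hN (fun _ _ => rfl), TensorProduct.map_tmul,
    LinearMap.id_apply, hN1, TensorProduct.zero_tmul, mul_zero, add_zero, zero_add] at E2
  have hNx2 : N x = ι g + c • x := by
    rw [hNx, he3, AlgHom.commutes, ← Algebra.smul_def]
  have hct : c • t = v * (1 ⊗ₜ[k] g) := by
    rw [← Q10, he2, Algebra.algebraMap_eq_smul_one, ← TensorProduct.smul_tmul',
      ← Algebra.TensorProduct.one_def, mul_smul_comm, mul_one]
  have E3 : c • H.comul (N x) = TensorProduct.map ι.toLinearMap ι.toLinearMap v *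
      ((N x) ⊗ₜ[k] (1 : T)) * ((1 : T) ⊗ₜ[k] (N x)) := by
    rw [E2, smul_add, ← smul_mul_assoc, ← map_smul, hct, M_mul, TensorProduct.map_tmul,
      mul_assoc, mul_assoc, Algebra.TensorProduct.tmul_mul_tmul,
      Algebra.TensorProduct.tmul_mul_tmul, ← mul_smul_comm, ← mul_add]
    congr 1
    simp only [AlgHom.toLinearMap_apply, map_one, one_mul, mul_one]
    rw [← TensorProduct.tmul_smul, ← TensorProduct.tmul_add, ← hNx2]
  have E4 := H.antipode_mul_id (N x)
  rw [hεN, map_one] at E4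
  have E5 := congrArg (fun z => LinearMap.mul' k T (TensorProduct.map H.antipode LinearMap.id z)) E3
  simp only [map_smul, E4, mul'_right] at E5
  rw [← Algebra.algebraMap_eq_smul_one] at E5
  exact not_left_inv hT g c hc0 _ ((congrArg _ hNx2.symm).trans E5.symm)

end vanishing

end OreAux

/-- **Lemma 2.1.** Let `R` be a noetherian Hopf `k`-algebra with `R ⊗ₖ R` a domain and suppose
the Ore extension `T = R[x; σ, δ]` admits a Hopf algebra structure with `R` a Hopf subalgebra.
Then after a change of the variable `x` (with corresponding adjustments of `σ` and `δ`) one can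
ensure `ε(x) = 0` and `Δ(x) = s(1 ⊗ x) + t(x ⊗ 1) + w` for some `s, t, w ∈ R ⊗ₖ R`. -/
theorem stmt2 {k R T : Type*} [Field k] [Ring R] [HopfAlgebra k R]
    [IsNoetherianRing R] [IsDomain (R ⊗[k] R)] [Ring T] [Algebra k T]
    (σ : R ≃ₐ[k] R) (δ : R →ₗ[k] R) (ι : R →ₐ[k] T) (x : T)
    (hT : IsOreExtension k σ δ ι x)
    (H : HopfAlgebraStructure k T) (hH : ExtendsHopf k ι H) :
    ∃ (y : T) (σ' : R ≃ₐ[k] R) (δ' : R →ₗ[k] R),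
      IsOreExtension k σ' δ' ι y ∧
      H.counit y = 0 ∧
      ∃ s t w : R ⊗[k] R,
        H.comul y
          = TensorProduct.map ι.toLinearMap ι.toLinearMap s * ((1 : T) ⊗ₜ[k] y)
            + TensorProduct.map ι.toLinearMap ι.toLinearMap t * (y ⊗ₜ[k] (1 : T))
            + TensorProduct.map ι.toLinearMap ι.toLinearMap w := by
  have hcop : ∃ (y : T) (δ' : R →ₗ[k] R), IsOreExtension k σ δ' ι y ∧ H.counit y = 0 := by
    obtain ⟨δ', h⟩ := OreAux.shift hT (H.counit x)
    refine ⟨_, δ', h, ?_⟩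
    rw [map_sub, Algebra.algebraMap_eq_smul_one, map_smul, H.counit_one, smul_eq_mul, mul_one,
      sub_self]
  obtain ⟨y, δ', hy, hε⟩ := hcop
  refine ⟨y, σ, δ', hy, hε, ?_⟩
  have hinj : Function.Injective (Coalgebra.comul (R := k) (A := R)) := by
    intro a b hab
    have ha := Coalgebra.lTensor_counit_comul (R := k) a
    have hb := Coalgebra.lTensor_counit_comul (R := k) b
    rw [hab, hb] at ha
    have := congrArg (TensorProduct.rid k R) ha
    simpa using this.symm
  have h1 := OreAux.degree_le hy H.comul H.comul_one H.comul_mul H.coassoc Coalgebra.comul hinj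
    hH.2.1
  have h2 := OreAux.degree_le hy ((TensorProduct.comm k T T).toLinearMap ∘ₗ H.comul)
    (by
      rw [LinearMap.comp_apply, H.comul_one]
      exact map_one (Algebra.TensorProduct.comm k T T))
    (by
      intro a b
      rw [LinearMap.comp_apply, H.comul_mul]
      exact map_mul (Algebra.TensorProduct.comm k T T) _ _)
    (OreAux.coop_coassoc H.comul H.coassoc _ rfl)
    ((TensorProduct.comm k R R).toLinearMap ∘ₗ Coalgebra.comul)
    ((TensorProduct.comm k R R).injective.comp hinj)
    (by
      intro r
      rw [LinearMap.comp_apply, hH.2.1, LinearMap.comp_apply]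
      generalize Coalgebra.comul (R := k) r = z
      induction z using TensorProduct.induction_on with
      | zero => simp
      | add u v hu hv => simp only [map_add, hu, hv]
      | tmul u v => simp)
  obtain ⟨s, t, v, w, h⟩ := OreAux.dec hy (H.comul y) h1 h2
  have hv := OreAux.v_zero hy H hH hε s t v w h
  refine ⟨s, t, w, ?_⟩
  rw [h, hv, map_zero, zero_mul, add_zero]
end

section
/- Let k be a field and let R be a noetherian Hopf k-algebra such that R⊗_k R is a domain. Suppose T=R[x;σ,δ] admits a Hopf algebra structure with R a Hopf subalgebra and that Δ(x) = s(1⊗x) + t(x⊗1) + w with s,t,w ∈ R⊗_k R. Then after a change of the variable x one may assume Δ(x) = β^{-1}⊗x + x⊗1 + w' where β is a grouplike element of R and w' = ∑w'₁⊗w'₂ ∈ R⊗_k R; moreover S(x) = -β(x + ∑w'₁S(w'₂)) and β·(∑w'₁S(w'₂)) = ∑S(w'₁)w'₂. -/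
open scoped TensorProduct

section Helpers

variable {k R T : Type*} [Field k] [Ring R] [Ring T] [Algebra k T]

/-- The left `R`-combination map. -/
noncomputable def orePhi [Algebra k R] (ι : R →ₐ[k] T) (x : T) : (ℕ →₀ R) →ₗ[k] T :=
  Finsupp.lsum k (fun i => (LinearMap.mulRight k (x ^ i)) ∘ₗ ι.toLinearMap)

lemma orePhi_apply [Algebra k R] (ι : R →ₐ[k] T) (x : T) (a : ℕ →₀ R) :
    orePhi ι x a = a.sum fun i r => ι r * x ^ i := by
  rw [orePhi, Finsupp.lsum_apply]; rfl

lemma orePhi_single [Algebra k R] (ι : R →ₐ[k] T) (x : T) (i : ℕ) (r : R) :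
    orePhi ι x (Finsupp.single i r) = ι r * x ^ i := by
  simp [orePhi]

lemma orePhi_bij [Algebra k R] {σ : R ≃ₐ[k] R} {δ : R →ₗ[k] R} {ι : R →ₐ[k] T} {x : T}
    (hT : IsOreExtension k σ δ ι x) : Function.Bijective (orePhi ι x) := by
  rw [Function.bijective_iff_existsUnique]
  intro b
  obtain ⟨a, h1, h2⟩ := hT.free b
  refine ⟨a, ?_, ?_⟩
  · simp only [orePhi_apply]; exact h1.symm
  · intro a' h
    apply h2
    rw [← h, orePhi_apply]

lemma orePhi_smul [Algebra k R] (ι : R →ₐ[k] T) (x : T) (r : R) (a : ℕ →₀ R) :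
    orePhi ι x (r • a) = ι r * orePhi ι x a := by
  induction a using Finsupp.induction_linear with
  | zero => simp
  | add f g hf hg => rw [smul_add, map_add, hf, hg, map_add, mul_add]
  | single i s => rw [Finsupp.smul_single, orePhi_single, orePhi_single, smul_eq_mul, map_mul,
      mul_assoc]

/-- powers of `y = u (x - c)` are triangular in powers of `x`. -/
lemma ore_pow [Algebra k R] {σ : R ≃ₐ[k] R} {δ : R →ₗ[k] R} {ι : R →ₐ[k] T} {x : T}
    (hT : IsOreExtension k σ δ ι x) (u v v' : R) (huv : u * v' = 1) (hvu : v' * u = 1) (n : ℕ) :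
    ∃ (p : R) (q : R) (a : ℕ →₀ R), p * q = 1 ∧ q * p = 1 ∧ (∀ j, n ≤ j → a j = 0) ∧
      (ι u * x + ι v) ^ n = ι p * x ^ n + orePhi ι x a := by
  -- multiplication by x raises degree by at most one
  have key : ∀ (n : ℕ) (a : ℕ →₀ R), (∀ j, n ≤ j → a j = 0) →
      ∃ b : ℕ →₀ R, (∀ j, n + 1 ≤ j → b j = 0) ∧ x * orePhi ι x a = orePhi ι x b := by
    intro n a ha
    refine ⟨a.sum fun i r => Finsupp.single (i+1) (σ r) + Finsupp.single i (δ r), ?_, ?_⟩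
    · intro j hj
      rw [Finsupp.sum_apply]
      apply Finset.sum_eq_zero
      intro i hi
      have : i < n := by
        by_contra h
        exact (Finsupp.mem_support_iff.mp hi) (ha i (by omega))
      simp only [Finsupp.add_apply]
      rw [Finsupp.single_eq_of_ne (by omega), Finsupp.single_eq_of_ne (by omega), add_zero]
    · rw [orePhi_apply, map_finsuppSum, Finsupp.sum, Finset.mul_sum]
      apply Finset.sum_congr rfl
      intro i _
      beta_reduce
      rw [map_add, orePhi_single, orePhi_single, ← mul_assoc, hT.rel, add_mul, mul_assoc,
        pow_succ']
  induction n with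
  | zero => exact ⟨1, 1, 0, by simp, by simp, by simp, by simp⟩
  | succ n ih =>
    obtain ⟨p, q, a, hpq, hqp, ha, h⟩ := ih
    obtain ⟨b, hb, hb'⟩ := key n a ha
    refine ⟨u * σ p, σ q * v', u • b + v • a + Finsupp.single n (u * δ p + v * p),
      ?_, ?_, ?_, ?_⟩
    · rw [mul_assoc, ← mul_assoc (σ p), ← map_mul, hpq, map_one, one_mul, huv]
    · rw [mul_assoc, ← mul_assoc v', hvu, one_mul, ← map_mul, hqp, map_one]
    · intro j hj
      simp only [Finsupp.add_apply, Finsupp.smul_apply]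
      rw [hb j hj, ha j (by omega), Finsupp.single_eq_of_ne (by omega)]
      simp
    · rw [pow_succ', h, add_mul, mul_add, mul_add, mul_assoc (ι u), mul_assoc (ι u), hb',
        ← mul_assoc x, hT.rel, map_add, map_add, orePhi_smul, orePhi_smul, orePhi_single]
      simp only [map_add, map_mul, pow_succ']
      noncomm_ring

lemma ore_change [Algebra k R] {σ : R ≃ₐ[k] R} {δ : R →ₗ[k] R} {ι : R →ₐ[k] T} {x : T}
    (hT : IsOreExtension k σ δ ι x) (u v v' : R) (huv : u * v' = 1) (hvu : v' * u = 1) :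
    ∃ (σ' : R ≃ₐ[k] R) (δ' : R →ₗ[k] R), IsOreExtension k σ' δ' ι (ι u * x + ι v) := by
  have hinj := (orePhi_bij hT).1
  have hsurj := (orePhi_bij hT).2
  let U : Rˣ := ⟨u, v', huv, hvu⟩
  let e : R ≃ₐ[k] R := AlgEquiv.ofAlgHom
    { toFun := fun r => u * σ r * v'
      map_one' := by simp [huv]
      map_mul' := fun a b => by
        simp only [map_mul, mul_assoc]
        rw [← mul_assoc v', hvu, one_mul]
      map_zero' := by simp
      map_add' := by intros; simp [mul_add, add_mul]
      commutes' := fun c => by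
        simp only [AlgEquiv.commutes]
        rw [← Algebra.commutes, mul_assoc, huv, mul_one] }
    { toFun := fun r => σ.symm (v' * r * u)
      map_one' := by simp [hvu]
      map_mul' := fun a b => by
        rw [← map_mul]
        congr 1
        simp only [mul_assoc]
        rw [← mul_assoc u, huv, one_mul]
      map_zero' := by simp
      map_add' := by intros; simp [mul_add, add_mul]
      commutes' := fun c => by
        rw [← Algebra.commutes, mul_assoc, hvu, mul_one, AlgEquiv.commutes] }
    (by
      ext r
      simp only [AlgHom.comp_apply, AlgHom.coe_mk, RingHom.coe_mk, MonoidHom.coe_mk,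
        OneHom.coe_mk, AlgEquiv.apply_symm_apply, AlgHom.id_apply]
      simp only [mul_assoc]
      rw [huv, mul_one, ← mul_assoc, huv, one_mul])
    (by
      ext r
      simp only [AlgHom.comp_apply, AlgHom.coe_mk, RingHom.coe_mk, MonoidHom.coe_mk,
        OneHom.coe_mk, AlgHom.id_apply]
      simp only [mul_assoc]
      rw [hvu, mul_one, ← mul_assoc, hvu, one_mul, AlgEquiv.symm_apply_apply])
  have he : ∀ r, e r = u * σ r * v' := fun r => rfl
  let d : R →ₗ[k] R := LinearMap.mulLeft k u ∘ₗ δ + LinearMap.mulLeft k v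
    - LinearMap.mulRight k v ∘ₗ e.toLinearMap
  have hd : ∀ r, d r = u * δ r + v * r - u * σ r * v' * v := fun r => rfl
  refine ⟨e, d, ?_, hT.injective, ?_, ?_⟩
  · intro a b
    simp only [he, hd, hT.isSigmaDerivation, map_mul]
    have h1 : u * σ a * v' * (u * δ b + v * b - u * σ b * v' * v)
      = u * σ a * (v' * u) * δ b + u * σ a * v' * v * b
        - u * σ a * (v' * u) * σ b * v' * v := by noncomm_ring
    rw [h1, hvu]
    noncomm_ring
  · intro r
    rw [he, hd, add_mul, mul_assoc, hT.rel]
    have h1 : ι (u * σ r * v') * (ι u * x + ι v)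
      = ι (u * σ r * (v' * u)) * x + ι (u * σ r * v' * v) := by
      simp only [map_mul]; noncomm_ring
    rw [h1, hvu]
    simp only [map_sub, map_add, map_mul, map_one]
    noncomm_ring
  · have hi : Function.Injective (orePhi ι (ι u * x + ι v)) := by
      rw [injective_iff_map_eq_zero]
      intro a ha
      by_contra hne
      -- top coefficient
      have hs : a.support.Nonempty := Finsupp.support_nonempty_iff.mpr hne
      let n := a.support.max' hs
      have hn : n ∈ a.support := Finset.max'_mem _ _
      have hle : ∀ i ∈ a.support, i ≤ n := fun i hi => Finset.le_max' _ _ hi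
      choose p q A hpq hqp hA hz using ore_pow hT u v v' huv hvu
      have h2 : orePhi ι x (a.sum fun i r => Finsupp.single i (r * p i) + r • A i) = 0 := by
        rw [← ha, orePhi_apply ι (ι u * x + ι v), map_finsuppSum]
        apply Finset.sum_congr rfl
        intro i _
        simp only
        rw [hz, map_add, orePhi_single, orePhi_smul, map_mul, mul_add, mul_assoc]
      have h3 := (map_eq_zero_iff _ hinj).mp h2
      have h4 := DFunLike.congr_fun h3 n
      rw [Finsupp.sum_apply, Finsupp.sum, Finset.sum_eq_single n] at h4
      · simp only [Finsupp.add_apply, Finsupp.single_eq_same, Finsupp.smul_apply,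
          hA n n le_rfl, smul_zero, add_zero, Finsupp.zero_apply] at h4
        have : a n = 0 := by
          rw [← mul_one (a n), ← hpq n, ← mul_assoc, h4, zero_mul]
        exact (Finsupp.mem_support_iff.mp hn) this
      · intro i hi hin
        have := hle i hi
        simp only [Finsupp.add_apply, Finsupp.smul_apply]
        rw [Finsupp.single_eq_of_ne (by omega), hA i n (by omega), smul_zero, add_zero]
      · intro h; exact absurd hn h
    have hsu : Function.Surjective (orePhi ι (ι u * x + ι v)) := by
      have hx : x = ι v' * (ι u * x + ι v) - ι (v' * v) := by
        rw [mul_add, ← mul_assoc, ← map_mul, hvu, map_mul]; simp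
      have hmulx : ∀ b, ∃ c, x * orePhi ι (ι u * x + ι v) b = orePhi ι (ι u * x + ι v) c := by
        intro b
        induction b using Finsupp.induction_linear with
        | zero => exact ⟨0, by simp⟩
        | add f g hf hg =>
          obtain ⟨f', hf⟩ := hf
          obtain ⟨g', hg⟩ := hg
          exact ⟨f' + g', by rw [map_add, mul_add, hf, hg, map_add]⟩
        | single i r =>
          refine ⟨Finsupp.single (i+1) (σ r * v')
            + Finsupp.single i (δ r - σ r * (v' * v)), ?_⟩
          rw [map_add, orePhi_single, orePhi_single, orePhi_single, ← mul_assoc, hT.rel]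
          have : ι (σ r) * x = ι (σ r * v') * (ι u * x + ι v) - ι (σ r * (v' * v)) := by
            conv_lhs => rw [hx]
            rw [mul_sub, ← mul_assoc, ← map_mul, ← map_mul]
          rw [this, pow_succ', map_sub]
          noncomm_ring
      have hpow : ∀ n, ∃ c, x ^ n = orePhi ι (ι u * x + ι v) c := by
        intro n
        induction n with
        | zero => exact ⟨Finsupp.single 0 1, by simp [orePhi_single]⟩
        | succ n ih =>
          obtain ⟨c, hc⟩ := ih
          obtain ⟨d, hd⟩ := hmulx c
          exact ⟨d, by rw [pow_succ', hc, hd]⟩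
      intro t
      obtain ⟨a, rfl⟩ := hsurj t
      induction a using Finsupp.induction_linear with
      | zero => exact ⟨0, by simp⟩
      | add f g hf hg =>
        obtain ⟨f', hf⟩ := hf
        obtain ⟨g', hg⟩ := hg
        exact ⟨f' + g', by rw [map_add, map_add, hf, hg]⟩
      | single i r =>
        obtain ⟨c, hc⟩ := hpow i
        exact ⟨r • c, by rw [orePhi_smul, orePhi_single, hc]⟩
    intro t
    obtain ⟨a, ha, hu⟩ := (Function.bijective_iff_existsUnique _).mp ⟨hi, hsu⟩ t
    refine ⟨a, ?_, ?_⟩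
    · simp only; rw [← ha, orePhi_apply]
    · intro b hb
      apply hu
      rw [orePhi_apply]; exact hb.symm


end Helpers

section Helpers2

variable {k R T : Type*} [Field k] [Ring R] [Ring T] [Algebra k T]

open TensorProduct

lemma map_id_P [Algebra k R] (ι : R →ₐ[k] T) (x : T) (P : T →ₗ[k] T) (a : R)
    (h0 : ∀ r, P (ι r) = 0) (h1 : ∀ r, P (ι r * x) = ι (r * a)) (s t w : R ⊗[k] R) :
    TensorProduct.map LinearMap.id P
      (Algebra.TensorProduct.map ι ι s * ((1 : T) ⊗ₜ[k] x)
        + Algebra.TensorProduct.map ι ι t * (x ⊗ₜ[k] (1 : T))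
        + Algebra.TensorProduct.map ι ι w)
      = Algebra.TensorProduct.map ι ι (s * ((1 : R) ⊗ₜ[k] a)) := by
  have e1 : TensorProduct.map LinearMap.id P
      (Algebra.TensorProduct.map ι ι s * ((1 : T) ⊗ₜ[k] x))
      = Algebra.TensorProduct.map ι ι (s * ((1 : R) ⊗ₜ[k] a)) := by
    induction s with
    | zero => simp
    | add p q hp hq => simp only [map_add, add_mul, hp, hq]
    | tmul p q => simp [h1]
  have e2 : TensorProduct.map LinearMap.id P
      (Algebra.TensorProduct.map ι ι t * (x ⊗ₜ[k] (1 : T))) = 0 := by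
    induction t with
    | zero => simp
    | add p q hp hq => simp only [map_add, add_mul, hp, hq, add_zero]
    | tmul p q => simp [h0]
  have e3 : TensorProduct.map LinearMap.id P (Algebra.TensorProduct.map ι ι w) = 0 := by
    induction w with
    | zero => simp
    | add p q hp hq => simp only [map_add, hp, hq, add_zero]
    | tmul p q => simp [h0]
  rw [map_add, map_add, e1, e2, e3, add_zero, add_zero]

lemma map_P_id [Algebra k R] (ι : R →ₐ[k] T) (x : T) (P : T →ₗ[k] T) (a : R)
    (h0 : ∀ r, P (ι r) = 0) (h1 : ∀ r, P (ι r * x) = ι (r * a)) (s t w : R ⊗[k] R) :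
    TensorProduct.map P LinearMap.id
      (Algebra.TensorProduct.map ι ι s * ((1 : T) ⊗ₜ[k] x)
        + Algebra.TensorProduct.map ι ι t * (x ⊗ₜ[k] (1 : T))
        + Algebra.TensorProduct.map ι ι w)
      = Algebra.TensorProduct.map ι ι (t * (a ⊗ₜ[k] (1 : R))) := by
  have e1 : TensorProduct.map P LinearMap.id
      (Algebra.TensorProduct.map ι ι s * ((1 : T) ⊗ₜ[k] x)) = 0 := by
    induction s with
    | zero => simp
    | add p q hp hq => simp only [map_add, add_mul, hp, hq, add_zero]
    | tmul p q => simp [h0]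
  have e2 : TensorProduct.map P LinearMap.id
      (Algebra.TensorProduct.map ι ι t * (x ⊗ₜ[k] (1 : T)))
      = Algebra.TensorProduct.map ι ι (t * (a ⊗ₜ[k] (1 : R))) := by
    induction t with
    | zero => simp
    | add p q hp hq => simp only [map_add, add_mul, hp, hq]
    | tmul p q => simp [h1]
  have e3 : TensorProduct.map P LinearMap.id (Algebra.TensorProduct.map ι ι w) = 0 := by
    induction w with
    | zero => simp
    | add p q hp hq => simp only [map_add, hp, hq, add_zero]
    | tmul p q => simp [h0]
  rw [map_add, map_add, e1, e2, e3, zero_add, add_zero]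

variable [HopfAlgebra k R]

/-- `id ⊗ ε` as an algebra map. -/
noncomputable def epsR (k R : Type*) [Field k] [Ring R] [HopfAlgebra k R] : R ⊗[k] R →ₐ[k] R :=
  (Algebra.TensorProduct.rid k k R).toAlgHom.comp
    (Algebra.TensorProduct.map (AlgHom.id k R) (Bialgebra.counitAlgHom k R))

/-- `ε ⊗ id` as an algebra map. -/
noncomputable def epsL (k R : Type*) [Field k] [Ring R] [HopfAlgebra k R] : R ⊗[k] R →ₐ[k] R :=
  (Algebra.TensorProduct.lid k R).toAlgHom.comp
    (Algebra.TensorProduct.map (Bialgebra.counitAlgHom k R) (AlgHom.id k R))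

lemma epsR_tmul (p q : R) : epsR k R (p ⊗ₜ q) = Coalgebra.counit (R := k) q • p := by
  simp [epsR]

lemma epsL_tmul (p q : R) : epsL k R (p ⊗ₜ q) = Coalgebra.counit (R := k) p • q := by
  simp [epsL]

lemma epsR_comul (r : R) : epsR k R (Coalgebra.comul r) = r := by
  have h := Coalgebra.lTensor_counit_comul (R := k) r
  have h2 := congrArg (TensorProduct.rid k R) h
  rw [TensorProduct.rid_tmul, one_smul] at h2
  exact h2

lemma epsL_comul (r : R) : epsL k R (Coalgebra.comul r) = r := by
  have h := Coalgebra.rTensor_counit_comul (R := k) r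
  have h2 := congrArg (TensorProduct.lid k R) h
  rw [TensorProduct.lid_tmul, one_smul] at h2
  exact h2

lemma f_right (ι : R →ₐ[k] T) (x : T) (f : T →ₗ[k] k)
    (h0 : ∀ r, f (ι r) = 0) (h1 : ∀ r, f (ι r * x) = Coalgebra.counit r) (s t w : R ⊗[k] R) :
    TensorProduct.rid k T (TensorProduct.map LinearMap.id f
      (Algebra.TensorProduct.map ι ι s * ((1 : T) ⊗ₜ[k] x)
        + Algebra.TensorProduct.map ι ι t * (x ⊗ₜ[k] (1 : T))
        + Algebra.TensorProduct.map ι ι w))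
      = ι (epsR k R s) := by
  have e1 : TensorProduct.rid k T (TensorProduct.map LinearMap.id f
      (Algebra.TensorProduct.map ι ι s * ((1 : T) ⊗ₜ[k] x))) = ι (epsR k R s) := by
    induction s with
    | zero => simp
    | add p q hp hq => simp only [map_add, add_mul, hp, hq]
    | tmul p q => simp [h1, epsR_tmul]
  have e2 : TensorProduct.map LinearMap.id f
      (Algebra.TensorProduct.map ι ι t * (x ⊗ₜ[k] (1 : T))) = 0 := by
    induction t with
    | zero => simp
    | add p q hp hq => simp only [map_add, add_mul, hp, hq, add_zero]
    | tmul p q => simp [h0]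
  have e3 : TensorProduct.map LinearMap.id f (Algebra.TensorProduct.map ι ι w) = 0 := by
    induction w with
    | zero => simp
    | add p q hp hq => simp only [map_add, hp, hq, add_zero]
    | tmul p q => simp [h0]
  simp only [map_add, e1, e2, e3, map_zero, add_zero]

lemma f_left (ι : R →ₐ[k] T) (x : T) (f : T →ₗ[k] k)
    (h0 : ∀ r, f (ι r) = 0) (h1 : ∀ r, f (ι r * x) = Coalgebra.counit r) (s t w : R ⊗[k] R) :
    TensorProduct.lid k T (TensorProduct.map f LinearMap.id
      (Algebra.TensorProduct.map ι ι s * ((1 : T) ⊗ₜ[k] x)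
        + Algebra.TensorProduct.map ι ι t * (x ⊗ₜ[k] (1 : T))
        + Algebra.TensorProduct.map ι ι w))
      = ι (epsL k R t) := by
  have e1 : TensorProduct.map f LinearMap.id
      (Algebra.TensorProduct.map ι ι s * ((1 : T) ⊗ₜ[k] x)) = 0 := by
    induction s with
    | zero => simp
    | add p q hp hq => simp only [map_add, add_mul, hp, hq, add_zero]
    | tmul p q => simp [h0]
  have e2 : TensorProduct.lid k T (TensorProduct.map f LinearMap.id
      (Algebra.TensorProduct.map ι ι t * (x ⊗ₜ[k] (1 : T)))) = ι (epsL k R t) := by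
    induction t with
    | zero => simp
    | add p q hp hq => simp only [map_add, add_mul, hp, hq]
    | tmul p q => simp [h1, epsL_tmul]
  have e3 : TensorProduct.map f LinearMap.id (Algebra.TensorProduct.map ι ι w) = 0 := by
    induction w with
    | zero => simp
    | add p q hp hq => simp only [map_add, hp, hq, add_zero]
    | tmul p q => simp [h0]
  simp only [map_add, e1, e2, e3, map_zero, add_zero, zero_add]

/-- `(id ⊗ f) ∘ Δ`. -/
noncomputable def coR (H : HopfAlgebraStructure k T) (f : T →ₗ[k] k) : T →ₗ[k] T :=
  (TensorProduct.rid k T).toLinearMap ∘ₗ TensorProduct.map LinearMap.id f ∘ₗ H.comul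

/-- `(f ⊗ id) ∘ Δ`. -/
noncomputable def coL (H : HopfAlgebraStructure k T) (f : T →ₗ[k] k) : T →ₗ[k] T :=
  (TensorProduct.lid k T).toLinearMap ∘ₗ TensorProduct.map f LinearMap.id ∘ₗ H.comul

lemma comul_coR (H : HopfAlgebraStructure k T) (f : T →ₗ[k] k) (y : T) :
    H.comul (coR H f y) = TensorProduct.map LinearMap.id (coR H f) (H.comul y) := by
  have h := congrArg (fun z => TensorProduct.rid k (T ⊗[k] T)
    (TensorProduct.map LinearMap.id f z)) (H.coassoc y)
  have A : ∀ z : T ⊗[k] T, TensorProduct.rid k (T ⊗[k] T) (TensorProduct.map LinearMap.id f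
      (TensorProduct.map H.comul LinearMap.id z))
      = H.comul (TensorProduct.rid k T (TensorProduct.map LinearMap.id f z)) := by
    intro z
    induction z with
    | zero => simp
    | add p q hp hq => simp only [map_add, hp, hq]
    | tmul p q => simp
  have B : ∀ z : T ⊗[k] T, TensorProduct.rid k (T ⊗[k] T) (TensorProduct.map LinearMap.id f
      ((TensorProduct.assoc k T T T).symm (TensorProduct.map LinearMap.id H.comul z)))
      = TensorProduct.map LinearMap.id (coR H f) z := by
    intro z
    induction z with
    | zero => simp
    | add p q hp hq => simp only [map_add, hp, hq]
    | tmul p q =>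
      simp only [coR, TensorProduct.map_tmul, LinearMap.comp_apply, LinearMap.id_apply,
        LinearEquiv.coe_coe]
      induction H.comul q with
      | zero => simp
      | add p q hp hq => simp only [map_add, tmul_add, hp, hq]
      | tmul p q => simp
  simp only [A, B] at h
  exact h

lemma comul_coL (H : HopfAlgebraStructure k T) (f : T →ₗ[k] k) (y : T) :
    H.comul (coL H f y) = TensorProduct.map (coL H f) LinearMap.id (H.comul y) := by
  have h := congrArg (fun z => TensorProduct.lid k (T ⊗[k] T)
    (TensorProduct.map f LinearMap.id (TensorProduct.assoc k T T T z))) (H.coassoc y)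
  simp only [LinearEquiv.apply_symm_apply] at h
  have A : ∀ z : T ⊗[k] T, TensorProduct.lid k (T ⊗[k] T) (TensorProduct.map f LinearMap.id
      (TensorProduct.map LinearMap.id H.comul z))
      = H.comul (TensorProduct.lid k T (TensorProduct.map f LinearMap.id z)) := by
    intro z
    induction z with
    | zero => simp
    | add p q hp hq => simp only [map_add, hp, hq]
    | tmul p q => simp
  have B : ∀ z : T ⊗[k] T, TensorProduct.lid k (T ⊗[k] T) (TensorProduct.map f LinearMap.id
      (TensorProduct.assoc k T T T (TensorProduct.map H.comul LinearMap.id z)))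
      = TensorProduct.map (coL H f) LinearMap.id z := by
    intro z
    induction z with
    | zero => simp
    | add p q hp hq => simp only [map_add, hp, hq]
    | tmul p q =>
      simp only [coL, TensorProduct.map_tmul, LinearMap.comp_apply, LinearMap.id_apply,
        LinearEquiv.coe_coe]
      induction H.comul p with
      | zero => simp
      | add p q hp hq => simp only [map_add, add_tmul, hp, hq]
      | tmul p q => simp [smul_tmul']
  simp only [A, B] at h
  exact h.symm

lemma coR_coL (H : HopfAlgebraStructure k T) (f : T →ₗ[k] k) (y : T) :
    TensorProduct.map (coR H f) LinearMap.id (H.comul y)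
      = TensorProduct.map LinearMap.id (coL H f) (H.comul y) := by
  have h := congrArg (fun z => TensorProduct.map
    ((TensorProduct.rid k T).toLinearMap ∘ₗ TensorProduct.map LinearMap.id f)
    LinearMap.id z) (H.coassoc y)
  have A : ∀ z : T ⊗[k] T, TensorProduct.map
    ((TensorProduct.rid k T).toLinearMap ∘ₗ TensorProduct.map LinearMap.id f)
      LinearMap.id (TensorProduct.map H.comul LinearMap.id z)
      = TensorProduct.map (coR H f) LinearMap.id z := by
    intro z
    induction z with
    | zero => simp
    | add p q hp hq => simp only [map_add, hp, hq]
    | tmul p q => simp [coR]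
  have B : ∀ z : T ⊗[k] T, TensorProduct.map
    ((TensorProduct.rid k T).toLinearMap ∘ₗ TensorProduct.map LinearMap.id f)
      LinearMap.id
      ((TensorProduct.assoc k T T T).symm (TensorProduct.map LinearMap.id H.comul z))
      = TensorProduct.map LinearMap.id (coL H f) z := by
    intro z
    induction z with
    | zero => simp
    | add p q hp hq => simp only [map_add, hp, hq]
    | tmul p q =>
      simp only [coL, TensorProduct.map_tmul, LinearMap.comp_apply, LinearMap.id_apply,
        LinearEquiv.coe_coe]
      induction H.comul q with
      | zero => simp
      | add p q hp hq => simp only [map_add, tmul_add, hp, hq]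
      | tmul p q => simp [smul_tmul]
  simp only [A, B] at h
  exact h

lemma counit_coR (H : HopfAlgebraStructure k T) (f : T →ₗ[k] k) (y : T) :
    H.counit (coR H f y) = f y := by
  conv_rhs => rw [← H.counit_comul y]
  simp only [coR, LinearMap.comp_apply, LinearEquiv.coe_coe]
  induction H.comul y with
  | zero => simp
  | add p q hp hq => simp only [map_add, hp, hq]
  | tmul p q => simp [mul_comm]

lemma counit_coL (H : HopfAlgebraStructure k T) (f : T →ₗ[k] k) (y : T) :
    H.counit (coL H f y) = f y := by
  conv_rhs => rw [← H.comul_counit y]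
  simp only [coL, LinearMap.comp_apply, LinearEquiv.coe_coe]
  induction H.comul y with
  | zero => simp
  | add p q hp hq => simp only [map_add, hp, hq]
  | tmul p q => simp [mul_comm]

/-- The three key identities. -/
lemma key_ids (σ : R ≃ₐ[k] R) (δ : R →ₗ[k] R) (ι : R →ₐ[k] T) (x : T)
    (hT : IsOreExtension k σ δ ι x)
    (H : HopfAlgebraStructure k T) (hH : ExtendsHopf k ι H)
    (s t w : R ⊗[k] R)
    (hx : H.comul x
        = Algebra.TensorProduct.map ι ι s * ((1 : T) ⊗ₜ[k] x)
          + Algebra.TensorProduct.map ι ι t * (x ⊗ₜ[k] (1 : T))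
          + Algebra.TensorProduct.map ι ι w) :
    ∃ a b : R, Coalgebra.counit (R := k) a = 1 ∧ Coalgebra.counit (R := k) b = 1 ∧
      Coalgebra.comul (R := k) a = s * (1 ⊗ₜ a) ∧ Coalgebra.comul (R := k) b = t * (b ⊗ₜ 1) ∧
      t * (a ⊗ₜ 1) = s * (1 ⊗ₜ b) := by
  obtain ⟨hc, hd, -⟩ := hH
  have hd : ∀ r, H.comul (ι r) = Algebra.TensorProduct.map ι ι (Coalgebra.comul r) := hd
  let Φ := LinearEquiv.ofBijective _ (orePhi_bij hT)
  let f : T →ₗ[k] k := Coalgebra.counit ∘ₗ Finsupp.lapply 1 ∘ₗ Φ.symm.toLinearMap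
  have hf : ∀ i r, f (ι r * x ^ i) = Coalgebra.counit ((Finsupp.single i r : ℕ →₀ R) 1) := by
    intro i r
    have : Φ.symm (ι r * x ^ i) = Finsupp.single i r := by
      rw [LinearEquiv.symm_apply_eq]
      exact (orePhi_single ι x i r).symm
    simp [f, this]
  have h0 : ∀ r, f (ι r) = 0 := by
    intro r
    have := hf 0 r
    simpa using this
  have h1 : ∀ r, f (ι r * x) = Coalgebra.counit r := by
    intro r
    have := hf 1 r
    simpa using this
  have hfx : f x = 1 := by simpa using h1 1
  have hrx : ∀ r, H.comul (ι r * x)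
        = Algebra.TensorProduct.map ι ι (Coalgebra.comul r * s) * ((1 : T) ⊗ₜ[k] x)
          + Algebra.TensorProduct.map ι ι (Coalgebra.comul r * t) * (x ⊗ₜ[k] (1 : T))
          + Algebra.TensorProduct.map ι ι (Coalgebra.comul r * w) := by
    intro r
    rw [H.comul_mul, hx, hd]
    simp only [map_mul, mul_add, mul_assoc]
  have R0 : ∀ r, coR H f (ι r) = 0 := by
    intro r
    have := f_right ι x f h0 h1 0 0 (Coalgebra.comul r)
    simpa [coR, hd] using this
  have L0 : ∀ r, coL H f (ι r) = 0 := by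
    intro r
    have := f_left ι x f h0 h1 0 0 (Coalgebra.comul r)
    simpa [coL, hd] using this
  have R1 : ∀ r, coR H f (ι r * x) = ι (r * epsR k R s) := by
    intro r
    simp only [coR, LinearMap.comp_apply, LinearEquiv.coe_coe]
    rw [hrx, f_right ι x f h0 h1, map_mul, epsR_comul]
  have L1 : ∀ r, coL H f (ι r * x) = ι (r * epsL k R t) := by
    intro r
    simp only [coL, LinearMap.comp_apply, LinearEquiv.coe_coe]
    rw [hrx, f_left ι x f h0 h1, map_mul, epsL_comul]
  have R2 : coR H f x = ι (epsR k R s) := by simpa using R1 1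
  have L2 : coL H f x = ι (epsL k R t) := by simpa using L1 1
  have hJ : Function.Injective (Algebra.TensorProduct.map ι ι) :=
    TensorProduct.map_injective_of_flat_flat' ι.toLinearMap ι.toLinearMap
      hT.injective hT.injective
  refine ⟨epsR k R s, epsL k R t, ?_, ?_, ?_, ?_, ?_⟩
  · rw [← hc, ← R2, counit_coR, hfx]
  · rw [← hc, ← L2, counit_coL, hfx]
  · apply hJ
    rw [← hd, ← R2, comul_coR, hx, map_id_P ι x _ _ R0 R1]
  · apply hJ
    rw [← hd, ← L2, comul_coL, hx, map_P_id ι x _ _ L0 L1]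
  · apply hJ
    have := coR_coL H f x
    rw [hx, map_P_id ι x _ _ R0 R1, map_id_P ι x _ _ L0 L1] at this
    exact this

lemma units_ids [IsDomain (R ⊗[k] R)] (s t : R ⊗[k] R) (a b : R)
    (ha : Coalgebra.counit (R := k) a = 1) (hb : Coalgebra.counit (R := k) b = 1)
    (hs : Coalgebra.comul (R := k) a = s * (1 ⊗ₜ a))
    (ht : Coalgebra.comul (R := k) b = t * (b ⊗ₜ 1))
    (hst : t * (a ⊗ₜ 1) = s * (1 ⊗ₜ b)) :
    ∃ g gi u v : R, g * gi = 1 ∧ gi * g = 1 ∧ u * v = 1 ∧ v * u = 1 ∧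
      Coalgebra.comul (R := k) g = g ⊗ₜ g ∧ Coalgebra.counit (R := k) g = 1 ∧
      HopfAlgebra.antipode (R := k) gi = g ∧
      Coalgebra.comul (R := k) u * s = gi ⊗ₜ u ∧
      Coalgebra.comul (R := k) u * t = u ⊗ₜ 1 := by
  have hmul : ∀ p q : R, Coalgebra.comul (R := k) (p * q)
    = Coalgebra.comul p * Coalgebra.comul q := Bialgebra.comul_mul
  have hone : Coalgebra.comul (R := k) (1 : R) = 1 := Bialgebra.comul_one
  have dom : ∀ p q : R, p * q = 1 → q * p = 1 := by
    intro p q h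
    have h1 : (p ⊗ₜ[k] (1 : R)) * (q ⊗ₜ[k] (1 : R)) = 1 := by
      rw [Algebra.TensorProduct.tmul_mul_tmul, h, mul_one]; rfl
    have h2 := mul_eq_one_symm h1
    have h3 := congrArg (epsR k R) h2
    simpa [epsR_tmul] using h3
  have hca : LinearMap.mul' k R (TensorProduct.map (HopfAlgebra.antipode (R := k))
      (LinearMap.id : R →ₗ[k] R) s) * a = 1 := by
    have h1 := HopfAlgebra.mul_antipode_rTensor_comul_apply (R := k) a
    rw [ha, map_one, hs] at h1
    rw [← h1]
    clear hs hst h1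
    induction s with
    | zero => simp
    | add p q hp hq => simp only [map_add, add_mul, hp, hq]
    | tmul p q => simp [mul_assoc]
  generalize LinearMap.mul' k R (TensorProduct.map (HopfAlgebra.antipode (R := k))
      (LinearMap.id : R →ₗ[k] R) s) = c at hca
  have hac := dom _ _ hca
  have hDc : Coalgebra.comul (R := k) c * Coalgebra.comul a = 1 := by rw [← hmul, hca, hone]
  have hs' : s = Coalgebra.comul (R := k) a * (1 ⊗ₜ c) := by
    rw [hs, mul_assoc, Algebra.TensorProduct.tmul_mul_tmul, hac, mul_one]
    exact (mul_one s).symm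
  have ht' : t = Coalgebra.comul (R := k) a * (c ⊗ₜ (c * b)) := by
    have : t = t * (a ⊗ₜ 1) * (c ⊗ₜ 1) := by
      rw [mul_assoc, Algebra.TensorProduct.tmul_mul_tmul, hac, mul_one]
      exact (mul_one t).symm
    rw [this, hst, hs']
    simp only [mul_assoc, Algebra.TensorProduct.tmul_mul_tmul, one_mul, mul_one]
  have hg : Coalgebra.comul (R := k) (c * b) = (c * b) ⊗ₜ (c * b) := by
    rw [hmul, ht, ht', ← mul_assoc, ← mul_assoc, hDc, one_mul,
      Algebra.TensorProduct.tmul_mul_tmul, mul_one]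
  have hec : Coalgebra.counit (R := k) c = 1 := by
    have := congrArg (Coalgebra.counit (R := k)) hca
    simpa [Bialgebra.counit_mul, ha] using this
  have heg : Coalgebra.counit (R := k) (c * b) = 1 := by
    rw [Bialgebra.counit_mul, hec, hb, one_mul]
  have hgi : HopfAlgebra.antipode (R := k) (c * b) * (c * b) = 1 := by
    have h1 := HopfAlgebra.mul_antipode_rTensor_comul_apply (R := k) (c * b)
    rw [heg, hg, map_one] at h1
    simpa using h1
  generalize HopfAlgebra.antipode (R := k) (c * b) = gi at hgi
  have hgi' := dom _ _ hgi
  have hegi : Coalgebra.counit (R := k) gi = 1 := by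
    have := congrArg (Coalgebra.counit (R := k)) hgi
    rw [Bialgebra.counit_mul, heg, mul_one, Bialgebra.counit_one] at this
    exact this
  have hDgi : Coalgebra.comul (R := k) gi = gi ⊗ₜ gi := by
    have h1 : Coalgebra.comul (R := k) gi * ((c * b) ⊗ₜ (c * b)) = 1 := by
      rw [← hg, ← hmul, hgi, hone]
    have h2 : ((c * b) ⊗ₜ[k] (c * b)) * (gi ⊗ₜ gi) = 1 := by
      rw [Algebra.TensorProduct.tmul_mul_tmul, hgi']; rfl
    exact left_inv_eq_right_inv h1 h2
  have hSgi : HopfAlgebra.antipode (R := k) gi * gi = 1 := by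
    have h1 := HopfAlgebra.mul_antipode_rTensor_comul_apply (R := k) gi
    rw [hegi, hDgi, map_one] at h1
    simpa using h1
  have hSg : HopfAlgebra.antipode (R := k) gi = c * b := left_inv_eq_right_inv hSgi hgi
  have huv : gi * c * b = 1 := by rw [mul_assoc, hgi]
  refine ⟨c * b, gi, gi * c, b, hgi', hgi, huv, dom _ _ huv, hg, heg, hSg, ?_, ?_⟩
  · rw [hs', hmul, mul_assoc, ← mul_assoc (Coalgebra.comul c), hDc, one_mul, hDgi,
      Algebra.TensorProduct.tmul_mul_tmul, mul_one]
  · rw [ht', hmul, mul_assoc, ← mul_assoc (Coalgebra.comul c), hDc, one_mul, hDgi,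
      Algebra.TensorProduct.tmul_mul_tmul, hgi]

lemma mul_id_S (ι : R →ₐ[k] T) (H : HopfAlgebraStructure k T) (hH : ExtendsHopf k ι H)
    (w : R ⊗[k] R) :
    LinearMap.mul' k T (TensorProduct.map LinearMap.id H.antipode
      (Algebra.TensorProduct.map ι ι w)) =
    ι (LinearMap.mul' k R (TensorProduct.map (LinearMap.id : R →ₗ[k] R)
              (HopfAlgebra.antipode (R := k)) w)) := by
  induction w with
  | zero => simp
  | add p q hp hq => simp only [map_add, hp, hq]
  | tmul p q => simp [hH.2.2]

lemma mul_S_id (ι : R →ₐ[k] T) (H : HopfAlgebraStructure k T) (hH : ExtendsHopf k ι H)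
    (w : R ⊗[k] R) :
    LinearMap.mul' k T (TensorProduct.map H.antipode LinearMap.id
      (Algebra.TensorProduct.map ι ι w)) =
    ι (LinearMap.mul' k R (TensorProduct.map (HopfAlgebra.antipode (R := k))
              (LinearMap.id : R →ₗ[k] R) w)) := by
  induction w with
  | zero => simp
  | add p q hp hq => simp only [map_add, hp, hq]
  | tmul p q => simp [hH.2.2]

end Helpers2

/-- **Lemma 2.2.** Let `R` be a noetherian Hopf `k`-algebra with `R ⊗ₖ R` a domain, suppose
`T = R[x; σ, δ]` admits a Hopf algebra structure with `R` a Hopf subalgebra and that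
`Δ(x) = s(1 ⊗ x) + t(x ⊗ 1) + w` with `s, t, w ∈ R ⊗ₖ R`.  Then after a change of the
variable `x` one may assume `Δ(x) = β⁻¹ ⊗ x + x ⊗ 1 + w'` with `β ∈ R` grouplike and
`w' ∈ R ⊗ₖ R`; moreover `S(x) = -β(x + ∑ w'₁S(w'₂))` and `β·(∑ w'₁S(w'₂)) = ∑ S(w'₁)w'₂`. -/
theorem stmt3 {k R T : Type*} [Field k] [Ring R] [HopfAlgebra k R]
    [IsNoetherianRing R] [IsDomain (R ⊗[k] R)] [Ring T] [Algebra k T]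
    (σ : R ≃ₐ[k] R) (δ : R →ₗ[k] R) (ι : R →ₐ[k] T) (x : T)
    (hT : IsOreExtension k σ δ ι x)
    (H : HopfAlgebraStructure k T) (hH : ExtendsHopf k ι H)
    (s t w : R ⊗[k] R)
    (hx : H.comul x
        = TensorProduct.map ι.toLinearMap ι.toLinearMap s * ((1 : T) ⊗ₜ[k] x)
          + TensorProduct.map ι.toLinearMap ι.toLinearMap t * (x ⊗ₜ[k] (1 : T))
          + TensorProduct.map ι.toLinearMap ι.toLinearMap w) :
    ∃ (y : T) (σ' : R ≃ₐ[k] R) (δ' : R →ₗ[k] R),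
      IsOreExtension k σ' δ' ι y ∧
      ∃ (β βi : R) (w' : R ⊗[k] R),
        β * βi = 1 ∧ βi * β = 1 ∧
        Coalgebra.comul β = β ⊗ₜ[k] β ∧ Coalgebra.counit (R := k) β = 1 ∧
        H.comul y = ι βi ⊗ₜ[k] y + y ⊗ₜ[k] 1
            + TensorProduct.map ι.toLinearMap ι.toLinearMap w' ∧
        H.antipode y = -(ι β * (y + ι (LinearMap.mul' k R
            (TensorProduct.map (LinearMap.id : R →ₗ[k] R)
              (HopfAlgebra.antipode (R := k)) w')))) ∧
        β * LinearMap.mul' k R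
            (TensorProduct.map (LinearMap.id : R →ₗ[k] R)
              (HopfAlgebra.antipode (R := k)) w')
          = LinearMap.mul' k R
            (TensorProduct.map (HopfAlgebra.antipode (R := k))
              (LinearMap.id : R →ₗ[k] R) w') := by
  have hx : H.comul x
        = Algebra.TensorProduct.map ι ι s * ((1 : T) ⊗ₜ[k] x)
          + Algebra.TensorProduct.map ι ι t * (x ⊗ₜ[k] (1 : T))
          + Algebra.TensorProduct.map ι ι w := hx
  obtain ⟨a, b, ha, hb, hs, ht, hst⟩ := key_ids σ δ ι x hT H hH s t w hx
  obtain ⟨g, gi, u, v, hg1, hg2, huv, hvu, hg, heg, hSg, hus, hut⟩ :=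
    units_ids s t a b ha hb hs ht hst
  obtain ⟨σ', δ', hore⟩ := ore_change hT u (-(H.counit x • u)) v huv hvu
  have hd : ∀ r, H.comul (ι r) = Algebra.TensorProduct.map ι ι (Coalgebra.comul r) := hH.2.1
  have hux : ι u * x = (ι u * x + ι (-(H.counit x • u))) + H.counit x • ι u := by
    rw [map_neg, map_smul]; abel
  have hy0 : H.counit (ι u * x + ι (-(H.counit x • u))) = 0 := by
    rw [map_neg, map_smul, map_add, map_neg, map_smul, H.counit_mul, smul_eq_mul]
    ring
  have hΔ : H.comul (ι u * x + ι (-(H.counit x • u)))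
      = ι gi ⊗ₜ[k] (ι u * x + ι (-(H.counit x • u)))
        + (ι u * x + ι (-(H.counit x • u))) ⊗ₜ[k] 1
        + Algebra.TensorProduct.map ι ι (Coalgebra.comul u * w
          - H.counit x • Coalgebra.comul u + H.counit x • (gi ⊗ₜ u) + H.counit x • (u ⊗ₜ 1)) := by
    have h1 : H.comul (ι u * x) = ι gi ⊗ₜ[k] (ι u * x) + (ι u * x) ⊗ₜ[k] 1
        + Algebra.TensorProduct.map ι ι (Coalgebra.comul u * w) := by
      rw [H.comul_mul, hx, hd, mul_add, mul_add, ← mul_assoc, ← mul_assoc, ← map_mul, ← map_mul,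
        ← map_mul, hus, hut]
      simp
    rw [map_add, h1, hd]
    simp only [map_add, map_sub, map_neg, map_smul, TensorProduct.tmul_add,
      TensorProduct.add_tmul, TensorProduct.tmul_neg, TensorProduct.neg_tmul,
      TensorProduct.tmul_smul, TensorProduct.smul_tmul', Algebra.TensorProduct.map_tmul, map_one]
    abel
  generalize Coalgebra.comul u * w - H.counit x • Coalgebra.comul u
    + H.counit x • (gi ⊗ₜ u) + H.counit x • (u ⊗ₜ[k] (1 : R)) = w' at hΔ
  generalize ι u * x + ι (-(H.counit x • u)) = y at *
  have hS1 : H.antipode 1 = 1 := by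
    have := H.antipode_mul_id 1
    rw [H.comul_one, H.counit_one, Algebra.TensorProduct.one_def, TensorProduct.map_tmul,
      LinearMap.mul'_apply, LinearMap.id_apply, mul_one, RingHom.map_one] at this
    exact this
  have e1 := H.id_mul_antipode y
  have e2 := H.antipode_mul_id y
  rw [hΔ, hy0, map_zero, map_add, map_add, map_add, map_add, mul_id_S ι H hH] at e1
  rw [hΔ, hy0, map_zero, map_add, map_add, map_add, map_add, mul_S_id ι H hH] at e2
  simp only [TensorProduct.map_tmul, LinearMap.mul'_apply, LinearMap.id_apply, hS1, mul_one,
    hH.2.2, hSg] at e1 e2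
  have hgg : ι g * ι gi = 1 := by rw [← map_mul, hg1, map_one]
  have hSy : H.antipode y = -(ι g * (y + ι (LinearMap.mul' k R
            (TensorProduct.map (LinearMap.id : R →ₗ[k] R)
              (HopfAlgebra.antipode (R := k)) w')))) := by
    have := congrArg (fun z => ι g * z) e1
    simp only [mul_add, ← mul_assoc, hgg, one_mul, mul_zero] at this
    rw [mul_add, eq_neg_iff_add_eq_zero, ← add_assoc]
    exact this
  refine ⟨y, σ', δ', hore, g, gi, w', hg1, hg2, hg, heg, hΔ, hSy, ?_⟩
  apply hT.injective
  rw [hSy] at e2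
  rw [map_mul, ← sub_eq_zero, ← neg_eq_zero, ← e2]
  noncomm_ring
end

section
/- Let k be a field, let R be a noetherian Hopf k-algebra such that R⊗_k R is a domain, and suppose the Ore extension T=R[x;σ,δ] admits a Hopf algebra structure extending that of R. Then after a change of the variable x, Δ(x) = β^{-1}⊗x + x⊗1 + w where β is a grouplike element of R and w ∈ R⊗_k R. In particular, the condition that Δ(x) have the form a⊗x + x⊗b + v(x⊗x) + w with a,b ∈ R and v,w ∈ R⊗_k R follows automatically from T being a Hopf algebra containing R as a Hopf subalgebra. -/
open scoped TensorProduct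

namespace Ore

section basic
variable {k R T : Type*} [Field k] [Ring R] [Algebra k R] [Ring T] [Algebra k T]

/-- evaluation of a finitely supported family of coefficients -/
noncomputable def ev (ι : R →ₐ[k] T) (x : T) : (ℕ →₀ R) →ₗ[k] T :=
  Finsupp.lsum k fun i => (LinearMap.mulRight k (x ^ i)).comp ι.toLinearMap

theorem ev_apply (ι : R →ₐ[k] T) (x : T) (a : ℕ →₀ R) :
    ev ι x a = a.sum fun i r => ι r * x ^ i := by
  simp [ev]; try rfl

theorem ev_single (ι : R →ₐ[k] T) (x : T) (i : ℕ) (r : R) :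
    ev ι x (Finsupp.single i r) = ι r * x ^ i := by
  simp [ev]; try rfl

variable {σ : R ≃ₐ[k] R} {δ : R →ₗ[k] R} {ι : R →ₐ[k] T} {x : T}

theorem ev_bij (hT : IsOreExtension k σ δ ι x) : Function.Bijective (ev ι x) := by
  rw [Function.bijective_iff_existsUnique]
  intro t
  obtain ⟨a, ha, hu⟩ := hT.free t
  refine ⟨a, ?_, fun b hb => hu b ?_⟩
  · simp only [ev_apply]; exact ha.symm
  · simp only [ev_apply] at hb; exact hb.symm

theorem free_of_bij (h : Function.Bijective (ev ι x)) (t : T) :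
    ∃! a : ℕ →₀ R, t = a.sum fun i r => ι r * x ^ i := by
  rw [Function.bijective_iff_existsUnique] at h
  obtain ⟨a, ha, hu⟩ := h t
  refine ⟨a, ?_, fun b hb => hu b ?_⟩
  · simp only [ev_apply] at ha; exact ha.symm
  · simp only [ev_apply]; exact hb.symm

/-- coefficients -/
noncomputable def cf (hT : IsOreExtension k σ δ ι x) : T ≃ₗ[k] (ℕ →₀ R) :=
  (LinearEquiv.ofBijective (ev ι x) (ev_bij hT)).symm

/-- `i`-th coefficient -/
noncomputable def pi (hT : IsOreExtension k σ δ ι x) (i : ℕ) : T →ₗ[k] R :=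
  (Finsupp.lapply i).comp (cf hT).toLinearMap

variable (hT : IsOreExtension k σ δ ι x)

theorem cf_symm_single (i : ℕ) (r : R) :
    (cf hT).symm (Finsupp.single i r) = ι r * x ^ i := by
  simp [cf, ev_single]

theorem cf_mono (i : ℕ) (r : R) : cf hT (ι r * x ^ i) = Finsupp.single i r := by
  rw [← cf_symm_single hT, LinearEquiv.apply_symm_apply]

theorem pi_mono (i j : ℕ) (r : R) : pi hT i (ι r * x ^ j) = if j = i then r else 0 := by
  simp [pi, cf_mono, Finsupp.single_apply]

@[elab_as_elim]
theorem ind {P : T → Prop} (t : T) (h0 : P 0) (hadd : ∀ a b, P a → P b → P (a + b))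
    (hm : ∀ r i, P (ι r * x ^ i)) (hT : IsOreExtension k σ δ ι x) : P t := by
  obtain ⟨a, rfl⟩ := (ev_bij hT).2 t
  induction a using Finsupp.induction_linear with
  | zero => simpa using h0
  | add f g hf hg => rw [map_add]; exact hadd _ _ hf hg
  | single i r => rw [ev_single]; exact hm r i

theorem lin_ext {M : Type*} [AddCommMonoid M] [Module k M] (hT : IsOreExtension k σ δ ι x)
    {f g : T →ₗ[k] M}
    (h : ∀ r i, f (ι r * x ^ i) = g (ι r * x ^ i)) : f = g := by
  ext t
  refine ind t (by simp) (fun a b ha hb => by simp [ha, hb]) h hT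

theorem pi_unique (i : ℕ) (p : T →ₗ[k] R) (hp : ∀ r j, p (ι r * x ^ j) = if j = i then r else 0) :
    p = pi hT i :=
  lin_ext hT fun r j => by rw [hp, pi_mono]

theorem pi_ext {s t : T} (h : ∀ i, pi hT i s = pi hT i t) : s = t := by
  apply (cf hT).injective
  ext i
  exact h i

theorem pi_smul (i : ℕ) (r : R) (t : T) : pi hT i (ι r * t) = r * pi hT i t := by
  refine ind t (by simp) (fun a b ha hb => by simp [mul_add, ha, hb]) (fun s j => ?_) hT
  rw [← mul_assoc, ← map_mul, pi_mono, pi_mono]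
  split_ifs <;> simp

theorem pi_iota (i : ℕ) (r : R) : pi hT i (ι r) = if 0 = i then r else 0 := by
  simpa using pi_mono hT i 0 r

theorem pi_iota_x (i : ℕ) (r : R) : pi hT i (ι r * x) = if 1 = i then r else 0 := by
  simpa using pi_mono hT i 1 r

theorem pi_mul_x_succ (i : ℕ) (t : T) : pi hT (i + 1) (t * x) = pi hT i t := by
  refine ind t (by simp) (fun a b ha hb => by simp [add_mul, ha, hb]) (fun s j => ?_) hT
  rw [mul_assoc, ← pow_succ, pi_mono, pi_mono]
  simp

theorem pi_mul_x_zero (t : T) : pi hT 0 (t * x) = 0 := by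
  refine ind t (by simp) (fun a b ha hb => by simp [add_mul, ha, hb]) (fun s j => ?_) hT
  rw [mul_assoc, ← pow_succ, pi_mono]
  simp

theorem pi_x_mul_succ (i : ℕ) (t : T) :
    pi hT (i + 1) (x * t) = σ (pi hT i t) + δ (pi hT (i + 1) t) := by
  refine ind t (by simp) (fun a b ha hb => by simp [mul_add, ha, hb]; abel) (fun s j => ?_) hT
  rw [← mul_assoc, hT.rel, add_mul, mul_assoc, ← pow_succ', map_add]
  simp only [pi_mono]
  split_ifs <;> simp_all

theorem pi_x_mul_zero (t : T) :
    pi hT 0 (x * t) = δ (pi hT 0 t) := by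
  refine ind t (by simp) (fun a b ha hb => by simp [mul_add, ha, hb]) (fun s j => ?_) hT
  rw [← mul_assoc, hT.rel, add_mul, mul_assoc, ← pow_succ', map_add]
  simp only [pi_mono]
  split_ifs <;> simp_all

/-- degree at most `n` -/
def dle (n : ℕ) (t : T) : Prop := ∀ i, n < i → pi hT i t = 0

theorem exists_dle (t : T) : ∃ n, dle hT n t := by
  refine ⟨(cf hT t).support.sup id, fun i hi => ?_⟩
  by_contra h
  have : i ∈ (cf hT t).support := by
    rw [Finsupp.mem_support_iff]; exact h
  have := Finset.le_sup (f := id) this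
  simp at this
  omega

theorem exists_deg (t : T) (ht : t ≠ 0) : ∃ n, dle hT n t ∧ pi hT n t ≠ 0 := by
  classical
  have hex := exists_dle hT t
  refine ⟨Nat.find hex, Nat.find_spec hex, fun h => ?_⟩
  rcases Nat.eq_zero_or_pos (Nat.find hex) with h0 | h0
  · apply ht
    apply pi_ext hT
    intro i
    rw [map_zero]
    rcases Nat.eq_zero_or_pos i with rfl | hi
    · rw [h0] at h; exact h
    · exact Nat.find_spec hex i (by omega)
  · refine Nat.find_min hex (m := Nat.find hex - 1) (by omega) fun i hi => ?_
    rcases Nat.lt_or_ge (Nat.find hex) i with h1 | h1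
    · exact Nat.find_spec hex i h1
    · have : i = Nat.find hex := by omega
      rw [this]; exact h

theorem expand (n : ℕ) (t : T) (h : dle hT n t) :
    t = ∑ i ∈ Finset.range (n + 1), ι (pi hT i t) * x ^ i := by
  apply pi_ext hT
  intro j
  rw [map_sum]
  simp only [pi_mono]
  rw [Finset.sum_ite_eq']
  split_ifs with hj
  · rfl
  · exact h j (by simpa using hj)

theorem dle_add {n : ℕ} {s t : T} (hs : dle hT n s) (ht : dle hT n t) : dle hT n (s + t) := by
  intro i hi; rw [map_add, hs i hi, ht i hi, add_zero]

theorem dle_mono {m n : ℕ} {s : T} (h : m ≤ n) (hs : dle hT m s) : dle hT n s :=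
  fun i hi => hs i (by omega)

theorem dle_x_pow_mul (a b : ℕ) (g : T) (hg : dle hT b g) :
    dle hT (a + b) (x ^ a * g) ∧ pi hT (a + b) (x ^ a * g) = (σ ^ a) (pi hT b g) := by
  induction a with
  | zero => simpa using hg
  | succ a ih =>
    rw [pow_succ', mul_assoc]
    constructor
    · intro i hi
      obtain ⟨j, rfl⟩ : ∃ j, i = j + 1 := ⟨i - 1, by omega⟩
      rw [pi_x_mul_succ, ih.1 j (by omega), ih.1 (j+1) (by omega)]
      simp
    · rw [show a + 1 + b = (a + b) + 1 by ring, pi_x_mul_succ, ih.2, ih.1 _ (by omega), pow_succ']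
      simp

theorem lead_mul {a b : ℕ} {f g : T} (hf : dle hT a f) (hg : dle hT b g) :
    dle hT (a + b) (f * g) ∧ pi hT (a + b) (f * g) = pi hT a f * (σ ^ a) (pi hT b g) := by
  have key : f * g = ∑ i ∈ Finset.range (a + 1), ι (pi hT i f) * (x ^ i * g) := by
    conv_lhs => rw [expand hT a f hf]
    rw [Finset.sum_mul]
    simp only [mul_assoc]
  constructor
  · intro j hj
    rw [key, map_sum]
    refine Finset.sum_eq_zero fun i hi => ?_
    rw [Finset.mem_range] at hi
    rw [pi_smul, (dle_x_pow_mul hT i b g hg).1 j (by omega), mul_zero]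
  · rw [key, map_sum, Finset.sum_range_succ, Finset.sum_eq_zero, zero_add, pi_smul,
      (dle_x_pow_mul hT a b g hg).2]
    intro i hi
    rw [Finset.mem_range] at hi
    rw [pi_smul, (dle_x_pow_mul hT i b g hg).1 _ (by omega), mul_zero]

theorem pi_one (i : ℕ) : pi hT i 1 = if 0 = i then 1 else 0 := by
  rw [← map_one ι, pi_iota]

theorem lead_pow [IsDomain R] {a : ℕ} {f : T} (hf : dle hT a f) (h : pi hT a f ≠ 0) (n : ℕ) :
    dle hT (a * n) (f ^ n) ∧ pi hT (a * n) (f ^ n) ≠ 0 := by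
  induction n with
  | zero =>
    constructor
    · intro i hi
      rw [pow_zero, pi_one, if_neg (by omega)]
    · simp [pi_one]
  | succ n ih =>
    have := lead_mul hT ih.1 hf
    rw [pow_succ, mul_add, mul_one]
    refine ⟨this.1, ?_⟩
    rw [this.2]
    refine mul_ne_zero ih.2 ?_
    exact (map_ne_zero_iff _ (AlgEquiv.injective (σ ^ (a * n)))).2 h

theorem isDomain (hT : IsOreExtension k σ δ ι x) [IsDomain R] : IsDomain T := by
  have : Nontrivial T := hT.injective.nontrivial
  have : NoZeroDivisors T := by
    constructor
    intro f g hfg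
    by_contra hc
    push Not at hc
    obtain ⟨a, ha, ha'⟩ := exists_deg hT f hc.1
    obtain ⟨b, hb, hb'⟩ := exists_deg hT g hc.2
    have := (lead_mul hT ha hb).2
    rw [hfg, map_zero] at this
    refine mul_ne_zero ha' ?_ this.symm
    exact (map_ne_zero_iff _ (AlgEquiv.injective (σ ^ a))).2 hb'
  exact NoZeroDivisors.to_isDomain T

theorem change [IsDomain R] (hT : IsOreExtension k σ δ ι x) (u ui s : R) (h1 : u * ui = 1)
    (h2 : ui * u = 1) :
    ∃ (σ' : R ≃ₐ[k] R) (δ' : R →ₗ[k] R), IsOreExtension k σ' δ' ι (ι u * x + ι s) := by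
  have hui : ∀ z, ui * (u * z) = z := fun z => by rw [← mul_assoc, h2, one_mul]
  have hui' : ∀ z, u * (ui * z) = z := fun z => by rw [← mul_assoc, h1, one_mul]
  let σ' : R ≃ₐ[k] R := AlgEquiv.ofAlgHom
    (AlgHom.ofLinearMap ((LinearMap.mulLeft k u).comp ((LinearMap.mulRight k ui).comp σ.toLinearMap))
      (by simp [h1]) (by intro a b; simp [mul_assoc, hui]))
    (AlgHom.ofLinearMap (σ.symm.toLinearMap.comp ((LinearMap.mulLeft k ui).comp (LinearMap.mulRight k u)))
      (by simp [h2]) (by intro a b; simp only [LinearMap.comp_apply, LinearMap.mulLeft_apply, LinearMap.mulRight_apply, AlgEquiv.toLinearMap_apply]; rw [← map_mul]; simp [mul_assoc, hui']))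
    (by ext a; simp [mul_assoc, hui', h1]) (by ext a; simp [mul_assoc, hui, h2])
  have hσ' : ∀ r, σ' r = u * σ r * ui := fun r => by
    simp [σ', mul_assoc]
  let δ' : R →ₗ[k] R := (LinearMap.mulLeft k u).comp δ + LinearMap.mulLeft k s
    - (LinearMap.mulRight k s).comp σ'.toLinearMap
  have hδ' : ∀ r, δ' r = u * δ r + s * r - σ' r * s := fun r => by simp [δ']
  set y := ι u * x + ι s with hy
  have rel : ∀ r : R, y * ι r = ι (σ' r) * y + ι (δ' r) := by
    intro r
    have e : ι u * (ι (σ r) * x) = ι (σ' r) * (ι u * x) := by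
      rw [hσ', ← mul_assoc, ← mul_assoc, ← map_mul, ← map_mul, mul_assoc (u * σ r), h2, mul_one]
    rw [hy, add_mul, mul_assoc, hT.rel, mul_add, mul_add, hδ', e]
    simp only [map_add, map_sub, map_mul]
    abel
  refine ⟨σ', δ', ⟨?_, hT.injective, rel, ?_⟩⟩
  · intro a b
    rw [hδ', hδ', hδ', hT.isSigmaDerivation, map_mul]
    have : u * (σ a * δ b) = σ' a * (u * δ b) := by
      rw [hσ']; simp only [mul_assoc, hui]
    simp only [mul_add, this, mul_sub, add_mul, sub_mul, mul_assoc]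
    abel
  · apply free_of_bij
    constructor
    · rw [← LinearMap.ker_eq_bot, LinearMap.ker_eq_bot']
      intro a ha
      by_contra hne
      have hs : a.support.Nonempty := Finsupp.support_nonempty_iff.mpr hne
      set n := a.support.max' hs with hn
      have hu0 : u ≠ 0 := by rintro rfl; simp at h1
      have hy1 : dle hT 1 y := by
        intro i hi
        rw [hy, map_add, pi_iota_x, pi_iota, if_neg (by omega), if_neg (by omega), add_zero]
      have hy2 : pi hT 1 y ≠ 0 := by
        rw [hy, map_add, pi_iota_x, pi_iota]; simpa using hu0
      have key := congrArg (pi hT n) ha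
      rw [ev_apply, Finsupp.sum, map_sum, map_zero, Finset.sum_eq_single n] at key
      · rw [pi_smul] at key
        refine mul_ne_zero ?_ ?_ key
        · exact Finsupp.mem_support_iff.mp (Finset.max'_mem _ _)
        · simpa using (lead_pow hT hy1 hy2 n).2
      · intro i hi hin
        rw [pi_smul]
        have : i ≤ n := Finset.le_max' _ _ hi
        rw [(lead_pow hT hy1 hy2 i).1 n (by omega), mul_zero]
      · intro h
        exact absurd (Finset.max'_mem _ _) h
    · have hR : ∀ r t, t ∈ LinearMap.range (ev ι y) → ι r * t ∈ LinearMap.range (ev ι y) := by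
        rintro r _ ⟨a, rfl⟩
        induction a using Finsupp.induction_linear with
        | zero => simp
        | add f g hf hg => rw [map_add, mul_add]; exact add_mem hf hg
        | single i s => 
          refine ⟨Finsupp.single i (r * s), ?_⟩
          rw [ev_single, ev_single, map_mul, mul_assoc]
      have hyy : ∀ t, t ∈ LinearMap.range (ev ι y) → y * t ∈ LinearMap.range (ev ι y) := by
        rintro _ ⟨a, rfl⟩
        induction a using Finsupp.induction_linear with
        | zero => simp
        | add f g hf hg => rw [map_add, mul_add]; exact add_mem hf hg
        | single i s => 
          refine ⟨Finsupp.single (i+1) (σ' s) + Finsupp.single i (δ' s), ?_⟩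
          rw [map_add, ev_single, ev_single, ev_single, ← mul_assoc, rel, add_mul, mul_assoc, pow_succ']
      have hx : x = ι ui * y - ι (ui * s) := by
        rw [hy, mul_add, ← mul_assoc, ← map_mul, h2, map_mul]; simp
      have hxx : ∀ t, t ∈ LinearMap.range (ev ι y) → x * t ∈ LinearMap.range (ev ι y) := by
        intro t ht
        rw [hx, sub_mul, mul_assoc]
        exact sub_mem (hR _ _ (hyy _ ht)) (hR _ _ ht)
      intro t
      change t ∈ LinearMap.range (ev ι y)
      refine ind t (zero_mem _) (fun a b ha hb => add_mem ha hb) (fun r i => ?_) hT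
      apply hR
      induction i with
      | zero => exact ⟨Finsupp.single 0 1, by simp [ev_single]⟩
      | succ i ih => rw [pow_succ']; exact hxx _ ih

end basic
end Ore

namespace Ore
section tensor
open TensorProduct
variable {k R T S : Type*} [Field k] [Ring R] [Algebra k R] [Ring T] [Algebra k T]
  [Ring S] [Algebra k S]
variable {σ : R ≃ₐ[k] R} {δ : R →ₗ[k] R} {ι : R →ₐ[k] T} {x : T}

theorem tensorR (S : Type*) [Ring S] [Algebra k S] (hT : IsOreExtension k σ δ ι x) :
    IsOreExtension k (Algebra.TensorProduct.congr σ (AlgEquiv.refl : S ≃ₐ[k] S))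
      (TensorProduct.map δ (LinearMap.id : S →ₗ[k] S))
      (Algebra.TensorProduct.map ι (AlgHom.id k S)) (x ⊗ₜ[k] (1 : S)) where
  isSigmaDerivation a b := by
    induction a with
    | zero => simp
    | add a a' ha ha' => simp only [add_mul, map_add, ha, ha']; abel
    | tmul a s =>
      induction b with
      | zero => simp
      | add a a' ha ha' => simp only [mul_add, map_add, ha, ha']; abel
      | tmul b s' => simp [hT.isSigmaDerivation, TensorProduct.add_tmul]
  injective := by
    have := TensorProduct.map_injective_of_flat_flat ι.toLinearMap (LinearMap.id : S →ₗ[k] S)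
      hT.injective Function.injective_id
    exact this
  rel r := by
    induction r with
    | zero => simp
    | add a a' ha ha' => simp only [mul_add, map_add, ha, ha', add_mul]; abel
    | tmul a s => simp [hT.rel, TensorProduct.add_tmul]
  free := by
    apply free_of_bij
    let E : T ⊗[k] S ≃ₗ[k] (ℕ →₀ R ⊗[k] S) :=
      (TensorProduct.congr (cf hT) (LinearEquiv.refl k S)).trans
        (TensorProduct.finsuppLeft k k R S ℕ)
    have : ev (Algebra.TensorProduct.map ι (AlgHom.id k S)) (x ⊗ₜ[k] (1 : S)) =
        E.symm.toLinearMap := by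
      ext i r s
      simp [ev_single, E, cf_symm_single]
    rw [this]
    exact E.symm.bijective

theorem tensorL (S : Type*) [Ring S] [Algebra k S] (hT : IsOreExtension k σ δ ι x) :
    IsOreExtension k (Algebra.TensorProduct.congr (AlgEquiv.refl : S ≃ₐ[k] S) σ)
      (TensorProduct.map (LinearMap.id : S →ₗ[k] S) δ)
      (Algebra.TensorProduct.map (AlgHom.id k S) ι) ((1 : S) ⊗ₜ[k] x) where
  isSigmaDerivation a b := by
    induction a with
    | zero => simp
    | add a a' ha ha' => simp only [add_mul, map_add, ha, ha']; abel
    | tmul a s =>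
      induction b with
      | zero => simp
      | add a a' ha ha' => simp only [mul_add, map_add, ha, ha']; abel
      | tmul b s' => simp [hT.isSigmaDerivation, TensorProduct.tmul_add]
  injective := by
    have := TensorProduct.map_injective_of_flat_flat (LinearMap.id : S →ₗ[k] S) ι.toLinearMap
      Function.injective_id hT.injective
    exact this
  rel r := by
    induction r with
    | zero => simp
    | add a a' ha ha' => simp only [mul_add, map_add, ha, ha', add_mul]; abel
    | tmul a s => simp [hT.rel, TensorProduct.tmul_add]
  free := by
    apply free_of_bij
    let E : S ⊗[k] T ≃ₗ[k] (ℕ →₀ S ⊗[k] R) :=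
      (TensorProduct.congr (LinearEquiv.refl k S) (cf hT)).trans
        (TensorProduct.finsuppRight k k S R ℕ)
    have : ev (Algebra.TensorProduct.map (AlgHom.id k S) ι) ((1 : S) ⊗ₜ[k] x) =
        E.symm.toLinearMap := by
      ext i s r
      simp [ev_single, E, cf_symm_single]
    rw [this]
    exact E.symm.bijective

theorem pi_tensorR (hT : IsOreExtension k σ δ ι x) (i : ℕ) :
    pi (tensorR S hT) i = TensorProduct.map (pi hT i) LinearMap.id := by
  symm
  apply pi_unique
  intro r j
  induction r with
  | zero => simp
  | add a a' ha ha' => rw [map_add, add_mul, map_add, ha, ha']; split_ifs <;> simp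
  | tmul a s => 
    simp [pi_mono]
    split_ifs <;> simp

theorem pi_tensorL (hT : IsOreExtension k σ δ ι x) (i : ℕ) :
    pi (tensorL S hT) i = TensorProduct.map LinearMap.id (pi hT i) := by
  symm
  apply pi_unique
  intro r j
  induction r with
  | zero => simp
  | add a a' ha ha' => rw [map_add, add_mul, map_add, ha, ha']; split_ifs <;> simp
  | tmul a s => 
    simp [pi_mono]
    split_ifs <;> simp

/-- slicing by a functional on the left -/
noncomputable def sl {M N : Type*} [AddCommGroup M] [Module k M] [AddCommGroup N] [Module k N]
    (φ : M →ₗ[k] k) : M ⊗[k] N →ₗ[k] N :=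
  (TensorProduct.lid k N).toLinearMap.comp (TensorProduct.map φ LinearMap.id)

/-- slicing by a functional on the right -/
noncomputable def sr {M N : Type*} [AddCommGroup M] [Module k M] [AddCommGroup N] [Module k N]
    (φ : N →ₗ[k] k) : M ⊗[k] N →ₗ[k] M :=
  (TensorProduct.rid k M).toLinearMap.comp (TensorProduct.map LinearMap.id φ)

@[simp] theorem sl_tmul {M N : Type*} [AddCommGroup M] [Module k M] [AddCommGroup N] [Module k N]
    (φ : M →ₗ[k] k) (m : M) (n : N) : sl φ (m ⊗ₜ[k] n) = φ m • n := by simp [sl]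

@[simp] theorem sr_tmul {M N : Type*} [AddCommGroup M] [Module k M] [AddCommGroup N] [Module k N]
    (φ : N →ₗ[k] k) (m : M) (n : N) : sr φ (m ⊗ₜ[k] n) = φ n • m := by simp [sr]

theorem sl_separate {M N : Type*} [AddCommGroup M] [Module k M] [AddCommGroup N] [Module k N]
    (f : M ⊗[k] N) (h : ∀ φ : M →ₗ[k] k, sl φ f = 0) : f = 0 := by
  classical
  let b := Module.Basis.ofVectorSpace k M
  let E := (TensorProduct.congr b.repr (LinearEquiv.refl k N)).trans
    (TensorProduct.finsuppScalarLeft k N _)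
  apply E.injective
  ext i
  rw [map_zero, Finsupp.zero_apply, ← h (b.coord i)]
  clear h
  induction f with
  | zero => simp
  | add a c ha hc => simp only [map_add, Finsupp.add_apply, ha, hc]
  | tmul m n => simp [E]

/-- The degree bound. -/
theorem degree_bound (hT : IsOreExtension k σ δ ι x) [IsDomain (R ⊗[k] R)]
    (D : T →ₐ[k] T ⊗[k] T) (DR : R →ₗ[k] R ⊗[k] R) (hDR : Function.Injective DR)
    (hD : ∀ r, D (ι r) = Algebra.TensorProduct.map ι ι (DR r))
    (coassoc : ∀ (φ : T →ₗ[k] k) (t : T),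
      D (sl φ (D t)) = TensorProduct.map ((sl φ).comp D.toLinearMap) LinearMap.id (D t)) :
    dle (tensorL T hT) 1 (D x) := by
  have hdom : IsDomain (T ⊗[k] R) := isDomain (tensorR R hT)
  by_cases h0 : D x = 0
  · intro i hi; rw [h0, map_zero]
  obtain ⟨n, hn, hn'⟩ := exists_deg (tensorL T hT) (D x) h0
  rcases Nat.lt_or_ge 1 n with h1 | h1
  swap
  · exact dle_mono _ h1 hn
  exfalso
  obtain ⟨φ, hφ⟩ : ∃ φ : T →ₗ[k] k, sl φ (pi (tensorL T hT) n (D x)) ≠ 0 := by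
    by_contra hc
    push Not at hc
    exact hn' (sl_separate _ hc)
  have hcomm : ∀ (i : ℕ) (f : T ⊗[k] T), pi hT i (sl φ f) = sl φ (pi (tensorL T hT) i f) := by
    intro i f
    rw [pi_tensorL hT]
    induction f with
    | zero => simp
    | add a c ha hc => simp only [map_add, ha, hc]
    | tmul m n => simp
  set t := sl φ (D x) with ht
  have ht1 : dle hT n t := fun i hi => by rw [ht, hcomm, hn i hi, map_zero]
  have ht2 : pi hT n t ≠ 0 := by rw [ht, hcomm]; exact hφ
  have hJ : ∀ r, D (ι r) = Algebra.TensorProduct.map (AlgHom.id k T) ι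
      (Algebra.TensorProduct.map ι (AlgHom.id k R) (DR r)) := by
    intro r
    rw [hD, ← AlgHom.comp_apply, ← Algebra.TensorProduct.map_comp]
    rfl
  have hJinj := (tensorR R hT).injective
  have hDt : D t = ∑ i ∈ Finset.range (n + 1), D (ι (pi hT i t)) * (D x) ^ i := by
    conv_lhs => rw [expand hT n t ht1]
    simp
  have hne : pi (tensorL T hT) (n * n) (D t) ≠ 0 := by
    rw [hDt, map_sum, Finset.sum_range_succ, Finset.sum_eq_zero, zero_add, hJ, pi_smul]
    · refine mul_ne_zero ?_ (lead_pow (tensorL T hT) hn hn' n).2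
      rw [Ne, map_eq_zero_iff _ hJinj, map_eq_zero_iff _ hDR]
      exact ht2
    · intro i hi
      rw [Finset.mem_range] at hi
      rw [hJ, pi_smul, (lead_pow (tensorL T hT) hn hn' i).1 (n * n) (by nlinarith), mul_zero]
  apply hne
  rw [ht, coassoc]
  have : ∀ (i : ℕ) (f : T ⊗[k] T), pi (tensorL T hT) i
      (TensorProduct.map ((sl φ).comp D.toLinearMap) LinearMap.id f) =
      TensorProduct.map ((sl φ).comp D.toLinearMap) LinearMap.id (pi (tensorL T hT) i f) := by
    intro i f
    rw [pi_tensorL hT]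
    induction f with
    | zero => simp
    | add a c ha hc => simp only [map_add, ha, hc]
    | tmul m n => simp
  rw [this, hn _ (by nlinarith), map_zero]

end tensor
end Ore

namespace Ore
section hopf
open TensorProduct
variable {k R T : Type*} [Field k] [Ring R] [HopfAlgebra k R] [Ring T] [Algebra k T]
variable {σ : R ≃ₐ[k] R} {δ : R →ₗ[k] R} {ι : R →ₐ[k] T} {x : T}

/-- The comultiplication as an algebra map -/
noncomputable def HD (H : HopfAlgebraStructure k T) : T →ₐ[k] T ⊗[k] T :=
  AlgHom.ofLinearMap H.comul H.comul_one H.comul_mul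

theorem HD_apply (H : HopfAlgebraStructure k T) (t : T) : HD H t = H.comul t := rfl

theorem antipode_anti (H : HopfAlgebraStructure k T) (a b : T) :
    H.antipode (a * b) = H.antipode b * H.antipode a := by
  let C : Coalgebra k T :=
    { comul := H.comul
      counit := H.counit
      coassoc := by
        ext t
        have := H.coassoc t
        rw [LinearEquiv.eq_symm_apply] at this
        exact this
      rTensor_counit_comp_comul := by
        ext t
        have := H.counit_comul t
        rw [← LinearEquiv.eq_symm_apply] at this
        exact this
      lTensor_counit_comp_comul := by
        ext t
        have := H.comul_counit t
        rw [← LinearEquiv.eq_symm_apply] at this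
        exact this }
  let B : Bialgebra k T := Bialgebra.mk' k T H.counit_one (fun {a b} => H.counit_mul a b)
    H.comul_one (fun {a b} => H.comul_mul a b)
  let HH : HopfAlgebra k T :=
    { B with
      antipode := H.antipode
      mul_antipode_rTensor_comul := by
        ext t
        exact H.antipode_mul_id t
      mul_antipode_lTensor_comul := by
        ext t
        exact H.id_mul_antipode t }
  exact HopfAlgebra.antipode_mul_antidistrib (R := k) a b

variable (H : HopfAlgebraStructure k T)

theorem coassocL (φ : T →ₗ[k] k) (t : T) :
    HD H (sl φ (HD H t)) = TensorProduct.map ((sl φ).comp (HD H).toLinearMap) LinearMap.id (HD H t) := by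
  have h := congrArg (TensorProduct.map (sl φ : T ⊗[k] T →ₗ[k] T) (LinearMap.id : T →ₗ[k] T)) (H.coassoc t)
  have h1 : ∀ z : T ⊗[k] T, TensorProduct.map (sl φ : T ⊗[k] T →ₗ[k] T) (LinearMap.id : T →ₗ[k] T)
      ((TensorProduct.assoc k T T T).symm (TensorProduct.map LinearMap.id H.comul z)) =
      H.comul (sl φ z) := by
    intro z
    induction z with
    | zero => simp
    | add a b ha hb => simp only [map_add, ha, hb]
    | tmul a b =>
      simp only [map_tmul, LinearMap.id_apply, sl_tmul, map_smul]
      generalize H.comul b = z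
      induction z with
      | zero => simp
      | add a b ha hb => simp only [map_add, ha, hb, tmul_add, smul_add]
      | tmul c d => simp [smul_tmul']
  have h2 : ∀ z : T ⊗[k] T, TensorProduct.map (sl φ : T ⊗[k] T →ₗ[k] T) (LinearMap.id : T →ₗ[k] T)
      (TensorProduct.map H.comul LinearMap.id z) =
      TensorProduct.map ((sl φ).comp (HD H).toLinearMap) LinearMap.id z := by
    intro z
    induction z with
    | zero => simp
    | add a b ha hb => simp only [map_add, ha, hb]
    | tmul a b => simp [HD_apply]
  rw [h1, h2] at h
  exact h.symm

theorem coassocM (φ : T →ₗ[k] k) (t : T) :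
    TensorProduct.map LinearMap.id ((sl φ).comp (HD H).toLinearMap) (HD H t)
     = TensorProduct.map ((sr φ).comp (HD H).toLinearMap) LinearMap.id (HD H t) := by
  have h := congrArg (TensorProduct.map (sr φ : T ⊗[k] T →ₗ[k] T) (LinearMap.id : T →ₗ[k] T)) (H.coassoc t)
  have h1 : ∀ z : T ⊗[k] T, TensorProduct.map (sr φ : T ⊗[k] T →ₗ[k] T) (LinearMap.id : T →ₗ[k] T)
      ((TensorProduct.assoc k T T T).symm (TensorProduct.map LinearMap.id H.comul z)) =
      TensorProduct.map LinearMap.id ((sl φ).comp (HD H).toLinearMap) z := by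
    intro z
    induction z with
    | zero => simp
    | add a b ha hb => simp only [map_add, ha, hb]
    | tmul a b =>
      simp only [map_tmul, LinearMap.id_apply, LinearMap.comp_apply, AlgHom.toLinearMap_apply, HD_apply]
      generalize H.comul b = z
      induction z with
      | zero => simp
      | add a b ha hb => simp only [map_add, ha, hb, tmul_add]
      | tmul c d => simp [smul_tmul']
  have h2 : ∀ z : T ⊗[k] T, TensorProduct.map (sr φ : T ⊗[k] T →ₗ[k] T) (LinearMap.id : T →ₗ[k] T)
      (TensorProduct.map H.comul LinearMap.id z) =
      TensorProduct.map ((sr φ).comp (HD H).toLinearMap) LinearMap.id z := by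
    intro z
    induction z with
    | zero => simp
    | add a b ha hb => simp only [map_add, ha, hb]
    | tmul a b => simp [HD_apply]
  rw [h1, h2] at h
  exact h.symm

theorem coassocR (φ : T →ₗ[k] k) (t : T) :
    HD H (sr φ (HD H t)) = TensorProduct.map LinearMap.id ((sr φ).comp (HD H).toLinearMap) (HD H t) := by
  have h0 := H.coassoc t
  rw [LinearEquiv.eq_symm_apply] at h0
  have h := congrArg (TensorProduct.map (LinearMap.id : T →ₗ[k] T) (sr φ : T ⊗[k] T →ₗ[k] T)) h0
  have h1 : ∀ z : T ⊗[k] T, TensorProduct.map (LinearMap.id : T →ₗ[k] T) (sr φ : T ⊗[k] T →ₗ[k] T)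
      ((TensorProduct.assoc k T T T) (TensorProduct.map H.comul LinearMap.id z)) =
      H.comul (sr φ z) := by
    intro z
    induction z with
    | zero => simp
    | add a b ha hb => simp only [map_add, ha, hb]
    | tmul a b =>
      simp only [map_tmul, LinearMap.id_apply, sr_tmul, map_smul]
      generalize H.comul a = z
      induction z with
      | zero => simp
      | add a b ha hb => simp only [map_add, ha, hb, add_tmul, smul_add]
      | tmul c d => simp
  have h2 : ∀ z : T ⊗[k] T, TensorProduct.map (LinearMap.id : T →ₗ[k] T) (sr φ : T ⊗[k] T →ₗ[k] T)
      (TensorProduct.map LinearMap.id H.comul z) =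
      TensorProduct.map LinearMap.id ((sr φ).comp (HD H).toLinearMap) z := by
    intro z
    induction z with
    | zero => simp
    | add a b ha hb => simp only [map_add, ha, hb]
    | tmul a b => simp [HD_apply]
  rw [h1, h2] at h
  exact h

theorem sl_comul (r : R) : sl (Coalgebra.counit (R := k)) (Coalgebra.comul (R := k) r) = r := by
  have := Coalgebra.rTensor_counit_comul (R := k) r
  have h := congrArg (TensorProduct.lid k R) this
  rw [TensorProduct.lid_tmul, one_smul] at h
  exact h

theorem sr_comul (r : R) : sr (Coalgebra.counit (R := k)) (Coalgebra.comul (R := k) r) = r := by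
  have := Coalgebra.lTensor_counit_comul (R := k) r
  have h := congrArg (TensorProduct.rid k R) this
  rw [TensorProduct.rid_tmul, one_smul] at h
  exact h

theorem HD_iota (hH : ExtendsHopf k ι H) (r : R) :
    HD H (ι r) = Algebra.TensorProduct.map ι ι (Coalgebra.comul (R := k) r) := hH.2.1 r

theorem comul_inj : Function.Injective (Coalgebra.comul (R := k) (A := R)) := by
  intro a b h
  rw [← sl_comul (k := k) a, h, sl_comul]

theorem form (hT : IsOreExtension k σ δ ι x) (hH : ExtendsHopf k ι H) [IsDomain (R ⊗[k] R)] :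
    ∃ w A B v : R ⊗[k] R, HD H x = Algebra.TensorProduct.map ι ι w
      + Algebra.TensorProduct.map ι ι A * (x ⊗ₜ[k] 1)
      + Algebra.TensorProduct.map ι ι B * (1 ⊗ₜ[k] x)
      + Algebra.TensorProduct.map ι ι v * (x ⊗ₜ[k] x) := by
  have hb2 := degree_bound hT (HD H) Coalgebra.comul comul_inj (HD_iota H hH) (coassocL H)
  have hslr : ∀ (φ : T →ₗ[k] k) (z : T ⊗[k] T),
      sl φ (Algebra.TensorProduct.comm k T T z) = sr φ z := by
    intro φ z
    induction z with
    | zero => simp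
    | add a b ha hb => simp only [map_add, ha, hb]
    | tmul a b => simp
  have hb1 := degree_bound hT ((Algebra.TensorProduct.comm k T T).toAlgHom.comp (HD H))
    ((Algebra.TensorProduct.comm k R R).toLinearMap.comp Coalgebra.comul)
    ((Algebra.TensorProduct.comm k R R).injective.comp comul_inj)
    (by
      intro r
      simp only [AlgHom.comp_apply, HD_iota H hH, LinearMap.comp_apply]
      generalize Coalgebra.comul (R := k) r = z
      induction z with
      | zero => simp
      | add a b ha hb => simp only [map_add, ha, hb]
      | tmul a b => simp)
    (by
      intro φ t
      change Algebra.TensorProduct.comm k T T (HD H (sl φ (Algebra.TensorProduct.comm k T T (HD H t))))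
        = TensorProduct.map _ _ (Algebra.TensorProduct.comm k T T (HD H t))
      rw [hslr, coassocR]
      generalize HD H t = z
      induction z with
      | zero => simp
      | add a b ha hb => simp only [map_add, ha, hb]
      | tmul a b =>
        simp
        rw [← hslr]
        rfl)
  have hb1' : ∀ i, 1 < i → TensorProduct.map (pi hT i) LinearMap.id (HD H x) = 0 := by
    intro i hi
    have := hb1 i hi
    rw [pi_tensorL hT] at this
    change TensorProduct.map LinearMap.id (pi hT i) (Algebra.TensorProduct.comm k T T (HD H x)) = 0 at this
    have h2 : ∀ z : T ⊗[k] T, TensorProduct.map LinearMap.id (pi hT i) (Algebra.TensorProduct.comm k T T z)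
      = TensorProduct.comm k R T (TensorProduct.map (pi hT i) LinearMap.id z) := by
      intro z
      induction z with
      | zero => simp
      | add a b ha hb => simp only [map_add, ha, hb]
      | tmul a b => simp
    rw [h2] at this
    exact (map_eq_zero_iff _ (TensorProduct.comm k R T).injective).1 this
  have hR : ∀ j, dle (tensorR R hT) 1 (pi (tensorL T hT) j (HD H x)) := by
    intro j i hi
    rw [pi_tensorL hT, pi_tensorR hT]
    have h2 : ∀ z : T ⊗[k] T, TensorProduct.map (pi hT i) LinearMap.id
        (TensorProduct.map LinearMap.id (pi hT j) z) =
        TensorProduct.map LinearMap.id (pi hT j) (TensorProduct.map (pi hT i) LinearMap.id z) := by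
      intro z
      induction z with
      | zero => simp
      | add a b ha hb => simp only [map_add, ha, hb]
      | tmul a b => simp
    rw [h2, hb1' i hi, map_zero]
  have e := expand _ _ _ hb2
  have e0 := expand _ _ _ (hR 0)
  have e1 := expand _ _ _ (hR 1)
  simp only [Finset.sum_range_succ, Finset.sum_range_zero, zero_add, pow_zero, pow_one, mul_one]
    at e e0 e1
  rw [e0, e1] at e
  have hJ : ∀ z, Algebra.TensorProduct.map (AlgHom.id k T) ι
      (Algebra.TensorProduct.map ι (AlgHom.id k R) z) = Algebra.TensorProduct.map ι ι z := by
    intro r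
    rw [← AlgHom.comp_apply, ← Algebra.TensorProduct.map_comp]
    rfl
  simp only [map_add, map_mul, hJ, add_mul, mul_assoc, Algebra.TensorProduct.map_tmul, map_one,
    AlgHom.id_apply, Algebra.TensorProduct.tmul_mul_tmul, one_mul, mul_one] at e
  rw [← add_assoc] at e
  exact ⟨_, _, _, _, e⟩

theorem map_pi (hT : IsOreExtension k σ δ ι x) (a b i j : ℕ) (z : R ⊗[k] R) :
    TensorProduct.map (pi hT a) (pi hT b) (Algebra.TensorProduct.map ι ι z * ((x ^ i) ⊗ₜ[k] (x ^ j)))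
      = if i = a ∧ j = b then z else 0 := by
  induction z with
  | zero => simp
  | add a b ha hb => simp only [map_add, add_mul, ha, hb]; split_ifs <;> simp
  | tmul r s => 
    simp only [Algebra.TensorProduct.map_tmul, Algebra.TensorProduct.tmul_mul_tmul, map_tmul, pi_mono]
    split_ifs <;> simp_all

theorem four_inj (hT : IsOreExtension k σ δ ι x) {w A B v w' A' B' v' : R ⊗[k] R}
    (h : Algebra.TensorProduct.map ι ι w
      + Algebra.TensorProduct.map ι ι A * (x ⊗ₜ[k] 1)
      + Algebra.TensorProduct.map ι ι B * (1 ⊗ₜ[k] x)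
      + Algebra.TensorProduct.map ι ι v * (x ⊗ₜ[k] x) = Algebra.TensorProduct.map ι ι w'
      + Algebra.TensorProduct.map ι ι A' * (x ⊗ₜ[k] 1)
      + Algebra.TensorProduct.map ι ι B' * (1 ⊗ₜ[k] x)
      + Algebra.TensorProduct.map ι ι v' * (x ⊗ₜ[k] x)) : w = w' ∧ A = A' ∧ B = B' ∧ v = v' := by
  have key : ∀ (w A B v : R ⊗[k] R) (a b : ℕ), TensorProduct.map (pi hT a) (pi hT b) 
      (Algebra.TensorProduct.map ι ι w
      + Algebra.TensorProduct.map ι ι A * (x ⊗ₜ[k] 1)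
      + Algebra.TensorProduct.map ι ι B * (1 ⊗ₜ[k] x)
      + Algebra.TensorProduct.map ι ι v * (x ⊗ₜ[k] x)) =
      (if 0 = a ∧ 0 = b then w else 0) + (if 1 = a ∧ 0 = b then A else 0) +
      (if 0 = a ∧ 1 = b then B else 0) + (if 1 = a ∧ 1 = b then v else 0) := by
    intro w A B v a b
    rw [← map_pi hT, ← map_pi hT, ← map_pi hT, ← map_pi hT]
    simp [← Algebra.TensorProduct.one_def]
  have h' := fun a b => congrArg (TensorProduct.map (pi hT a) (pi hT b)) h
  simp only [key] at h'
  refine ⟨?_, ?_, ?_, ?_⟩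
  · simpa using h' 0 0
  · simpa using h' 1 0
  · simpa using h' 0 1
  · simpa using h' 1 1

end hopf
end Ore

namespace Ore
section final
open TensorProduct
variable {k R T : Type*} [Field k] [Ring R] [HopfAlgebra k R] [Ring T] [Algebra k T]
variable {σ : R ≃ₐ[k] R} {δ : R →ₗ[k] R} {ι : R →ₐ[k] T} {x : T}

/-- the counit of `R` -/
noncomputable def eps (k R : Type*) [Field k] [Ring R] [HopfAlgebra k R] : R →ₗ[k] k :=
  Coalgebra.counit

theorem sl_J (φ : T →ₗ[k] k) (hφ : ∀ a t, φ (ι a * t) = eps k R a * φ t) (z : R ⊗[k] R) (s t : T) :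
    sl φ (Algebra.TensorProduct.map ι ι z * (s ⊗ₜ[k] t)) = φ s • (ι (sl (eps k R) z) * t) := by
  induction z with
  | zero => simp
  | add a b ha hb => simp only [map_add, add_mul, ha, hb, smul_add]
  | tmul a b => simp [hφ, smul_smul, mul_comm]

theorem sr_J (φ : T →ₗ[k] k) (hφ : ∀ a t, φ (ι a * t) = eps k R a * φ t) (z : R ⊗[k] R) (s t : T) :
    sr φ (Algebra.TensorProduct.map ι ι z * (s ⊗ₜ[k] t)) = φ t • (ι (sr (eps k R) z) * s) := by
  induction z with
  | zero => simp
  | add a b ha hb => simp only [map_add, add_mul, ha, hb, smul_add]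
  | tmul a b => simp [hφ, smul_smul, mul_comm]

theorem mapL_J (L : T →ₗ[k] T) (hL : ∀ a t, L (ι a * t) = ι a * L t) (z : R ⊗[k] R) (s t : T) :
    TensorProduct.map L LinearMap.id (Algebra.TensorProduct.map ι ι z * (s ⊗ₜ[k] t)) =
      Algebra.TensorProduct.map ι ι z * (L s ⊗ₜ[k] t) := by
  induction z with
  | zero => simp
  | add a b ha hb => simp only [map_add, add_mul, ha, hb]
  | tmul a b => simp [hL]

theorem mapR_J (L : T →ₗ[k] T) (hL : ∀ a t, L (ι a * t) = ι a * L t) (z : R ⊗[k] R) (s t : T) :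
    TensorProduct.map LinearMap.id L (Algebra.TensorProduct.map ι ι z * (s ⊗ₜ[k] t)) =
      Algebra.TensorProduct.map ι ι z * (s ⊗ₜ[k] L t) := by
  induction z with
  | zero => simp
  | add a b ha hb => simp only [map_add, add_mul, ha, hb]
  | tmul a b => simp [hL]

theorem sl_J' (φ : T →ₗ[k] k) (hφ : ∀ a t, φ (ι a * t) = eps k R a * φ t) (z : R ⊗[k] R)
    (f : T ⊗[k] T) :
    sl φ (Algebra.TensorProduct.map ι ι z * f) = ι (sl (eps k R) z) * sl φ f := by
  induction f with
  | zero => simp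
  | add a b ha hb => simp only [map_add, mul_add, ha, hb]
  | tmul a b => simp [sl_J φ hφ]

theorem sr_J' (φ : T →ₗ[k] k) (hφ : ∀ a t, φ (ι a * t) = eps k R a * φ t) (z : R ⊗[k] R)
    (f : T ⊗[k] T) :
    sr φ (Algebra.TensorProduct.map ι ι z * f) = ι (sr (eps k R) z) * sr φ f := by
  induction f with
  | zero => simp
  | add a b ha hb => simp only [map_add, mul_add, ha, hb]
  | tmul a b => simp [sr_J φ hφ]

theorem eps_mul (a b : R) : eps k R (a * b) = eps k R a * eps k R b := by simp [eps]
theorem eps_one : eps k R (1 : R) = 1 := by simp [eps]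

theorem eps_sl (z : R ⊗[k] R) : eps k R (sl (eps k R) z) = eps k R (sr (eps k R) z) := by
  induction z with
  | zero => simp
  | add a b ha hb => simp only [map_add, ha, hb]
  | tmul a b => simp [mul_comm]

/-- `S(z₁) z₂` -/
noncomputable def mS (k R : Type*) [Field k] [Ring R] [HopfAlgebra k R] : R ⊗[k] R →ₗ[k] R :=
  (LinearMap.mul' k R).comp (TensorProduct.map (HopfAlgebra.antipode k) LinearMap.id)

theorem mS_comul (r : R) : mS k R (Coalgebra.comul r) = algebraMap k R (eps k R r) :=
  HopfAlgebra.mul_antipode_rTensor_comul_apply (R := k) r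

theorem mS_right (z : R ⊗[k] R) (b : R) : mS k R (z * (1 ⊗ₜ[k] b)) = mS k R z * b := by
  induction z with
  | zero => simp
  | add a b ha hb => simp only [map_add, add_mul, ha, hb]
  | tmul a b => simp [mS, mul_assoc]

theorem mS_left (z : R ⊗[k] R) (b : R) :
    mS k R (z * (b ⊗ₜ[k] 1)) = HopfAlgebra.antipode k b * mS k R z := by
  induction z with
  | zero => simp
  | add a b ha hb => simp only [map_add, add_mul, mul_add, ha, hb]
  | tmul a b => simp [mS, mul_assoc, HopfAlgebra.antipode_mul_antidistrib]

theorem mS_J (H : HopfAlgebraStructure k T) (hH : ExtendsHopf k ι H) (z : R ⊗[k] R) (s t : T) :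
    LinearMap.mul' k T (TensorProduct.map H.antipode LinearMap.id
      (Algebra.TensorProduct.map ι ι z * (s ⊗ₜ[k] t))) = H.antipode s * ι (mS k R z) * t := by
  induction z with
  | zero => simp
  | add a b ha hb => simp only [map_add, add_mul, mul_add, ha, hb]
  | tmul a b => simp [mS, mul_assoc, antipode_anti, hH.2.2]

theorem HD_smul (H : HopfAlgebraStructure k T) (hH : ExtendsHopf k ι H) (φ : T →ₗ[k] k)
    (hφ : ∀ a t, φ (ι a * t) = eps k R a * φ t) (a : R) (t : T) :
    sl φ (HD H (ι a * t)) = ι a * sl φ (HD H t) ∧ sr φ (HD H (ι a * t)) = ι a * sr φ (HD H t) := by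
  rw [map_mul, HD_iota H hH, sl_J' φ hφ, sr_J' φ hφ]
  constructor
  · rw [eps, sl_comul]
  · rw [eps, sr_comul]

/-- all the relations coming from coassociativity and counit -/
theorem relations (H : HopfAlgebraStructure k T) (hH : ExtendsHopf k ι H)
    (hT : IsOreExtension k σ δ ι x) (hx : H.counit x = 0) (w A B v : R ⊗[k] R)
    (hf : HD H x = Algebra.TensorProduct.map ι ι w
      + Algebra.TensorProduct.map ι ι A * (x ⊗ₜ[k] 1)
      + Algebra.TensorProduct.map ι ι B * (1 ⊗ₜ[k] x)
      + Algebra.TensorProduct.map ι ι v * (x ⊗ₜ[k] x)) :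
    (sl (eps k R) B = 1 ∧ sr (eps k R) A = 1) ∧
    A * (sl (eps k R) A ⊗ₜ[k] 1) = Coalgebra.comul (sl (eps k R) A)
      + Coalgebra.comul (sl (eps k R) v) * w ∧
    B * (1 ⊗ₜ[k] sr (eps k R) B) = Coalgebra.comul (sr (eps k R) B)
      + Coalgebra.comul (sr (eps k R) v) * w ∧
    A * (sr (eps k R) B ⊗ₜ[k] 1) = B * (1 ⊗ₜ[k] sl (eps k R) A) ∧
    A * (sr (eps k R) v ⊗ₜ[k] 1) = v * (1 ⊗ₜ[k] sl (eps k R) A) ∧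
    v * (sr (eps k R) B ⊗ₜ[k] 1) = B * (1 ⊗ₜ[k] sl (eps k R) v) ∧
    v * (sr (eps k R) v ⊗ₜ[k] 1) = v * (1 ⊗ₜ[k] sl (eps k R) v) := by
  have h11 : ∀ z, Algebra.TensorProduct.map ι ι z = Algebra.TensorProduct.map ι ι z *
      ((1 : T) ⊗ₜ[k] (1 : T)) := fun z => by rw [← Algebra.TensorProduct.one_def, mul_one]
  rw [h11 w] at hf
  have hε : ∀ a t, H.counit (ι a * t) = eps k R a * H.counit t := fun a t => by
    rw [H.counit_mul, hH.1]; rfl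
  have c1 : sl H.counit (HD H x) = x := H.counit_comul x
  have c2 : sr H.counit (HD H x) = x := H.comul_counit x
  have hpx : ∀ i, pi hT i x = if 1 = i then 1 else 0 := fun i => by
    rw [← pi_iota_x hT i 1, map_one, one_mul]
  have hB : sl (eps k R) B = 1 := by
    rw [hf] at c1
    simp only [map_add, sl_J _ hε, hx, H.counit_one, zero_smul, one_smul, add_zero, mul_one] at c1
    have := congrArg (pi hT 1) c1
    simpa [pi_iota, pi_iota_x, hpx] using this
  have hA : sr (eps k R) A = 1 := by
    rw [hf] at c2
    simp only [map_add, sr_J _ hε, hx, H.counit_one, zero_smul, one_smul, add_zero, mul_one] at c2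
    have := congrArg (pi hT 1) c2
    simpa [pi_iota, pi_iota_x, hpx] using this
  set φ : T →ₗ[k] k := (eps k R).comp (pi hT 1) with hφdef
  have hφ : ∀ a t, φ (ι a * t) = eps k R a * φ t := fun a t => by
    simp [hφdef, pi_smul, eps_mul]
  have hφ1 : φ 1 = 0 := by simp [hφdef, pi_one]
  have hφx : φ x = 1 := by simp [hφdef, hpx, eps_one]
  set L : T →ₗ[k] T := (sl φ).comp (HD H).toLinearMap with hLdef
  set Q : T →ₗ[k] T := (sr φ).comp (HD H).toLinearMap with hQdef
  have hL : ∀ a t, L (ι a * t) = ι a * L t := fun a t => (HD_smul H hH φ hφ a t).1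
  have hQ : ∀ a t, Q (ι a * t) = ι a * Q t := fun a t => (HD_smul H hH φ hφ a t).2
  have hL1 : L 1 = 0 := by
    simp [hLdef, Algebra.TensorProduct.one_def, hφ1]
  have hQ1 : Q 1 = 0 := by
    simp [hQdef, Algebra.TensorProduct.one_def, hφ1]
  have hLx : L x = ι (sl (eps k R) A) + ι (sl (eps k R) v) * x := by
    change sl φ (HD H x) = _
    rw [hf]
    simp only [map_add, sl_J _ hφ, hφ1, hφx, zero_smul, one_smul, mul_one, add_zero, zero_add]
  have hQx : Q x = ι (sr (eps k R) B) + ι (sr (eps k R) v) * x := by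
    change sr φ (HD H x) = _
    rw [hf]
    simp only [map_add, sr_J _ hφ, hφ1, hφx, zero_smul, one_smul, mul_one, add_zero, zero_add]
  have t1 : ∀ (z : R ⊗[k] R) (r : R) (s t : T), Algebra.TensorProduct.map ι ι z * ((ι r * s) ⊗ₜ[k] t)
      = Algebra.TensorProduct.map ι ι (z * (r ⊗ₜ[k] 1)) * (s ⊗ₜ[k] t) := by
    intro z r s t
    simp [mul_assoc]
  have t2 : ∀ (z : R ⊗[k] R) (r : R) (s t : T), Algebra.TensorProduct.map ι ι z * (s ⊗ₜ[k] (ι r * t))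
      = Algebra.TensorProduct.map ι ι (z * (1 ⊗ₜ[k] r)) * (s ⊗ₜ[k] t) := by
    intro z r s t
    simp [mul_assoc]
  have t1' : ∀ (z : R ⊗[k] R) (r : R) (t : T), Algebra.TensorProduct.map ι ι z * ((ι r) ⊗ₜ[k] t)
      = Algebra.TensorProduct.map ι ι (z * (r ⊗ₜ[k] 1)) * (1 ⊗ₜ[k] t) := by
    intro z r t
    simp [mul_assoc]
  have t2' : ∀ (z : R ⊗[k] R) (r : R) (s : T), Algebra.TensorProduct.map ι ι z * (s ⊗ₜ[k] (ι r))
      = Algebra.TensorProduct.map ι ι (z * (1 ⊗ₜ[k] r)) * (s ⊗ₜ[k] 1) := by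
    intro z r t
    simp [mul_assoc]
  have eL := coassocL H φ x
  have eM := coassocM H φ x
  have eR := coassocR H φ x
  change HD H (L x) = TensorProduct.map L LinearMap.id (HD H x) at eL
  change TensorProduct.map LinearMap.id L (HD H x) = TensorProduct.map Q LinearMap.id (HD H x) at eM
  change HD H (Q x) = TensorProduct.map LinearMap.id Q (HD H x) at eR
  rw [hLx, map_add, map_mul, HD_iota H hH, HD_iota H hH, hf] at eL
  rw [hQx, map_add, map_mul, HD_iota H hH, HD_iota H hH, hf] at eR
  rw [hf] at eM
  simp only [map_add, mapL_J L hL, hL1, hLx, TensorProduct.zero_tmul, mul_zero, zero_add, add_zero,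
    TensorProduct.add_tmul, mul_add, t1, t1', ← mul_assoc, ← map_mul] at eL
  simp only [map_add, mapR_J Q hQ, hQ1, hQx, TensorProduct.tmul_zero, mul_zero, zero_add, add_zero,
    TensorProduct.tmul_add, mul_add, t2, t2', ← mul_assoc, ← map_mul] at eR
  simp only [map_add, mapL_J Q hQ, mapR_J L hL, hQ1, hL1, hLx, hQx, TensorProduct.zero_tmul,
    TensorProduct.tmul_zero, mul_zero, zero_add, add_zero, TensorProduct.add_tmul,
    TensorProduct.tmul_add, mul_add, t1, t1', t2, t2'] at eM
  simp only [← h11] at eL eM eR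
  have fL := four_inj hT (w := A * (sl (eps k R) A ⊗ₜ[k] 1)) (A := A * (sl (eps k R) v ⊗ₜ[k] 1))
    (B := v * (sl (eps k R) A ⊗ₜ[k] 1)) (v := v * (sl (eps k R) v ⊗ₜ[k] 1))
    (w' := Coalgebra.comul (sl (eps k R) A) + Coalgebra.comul (sl (eps k R) v) * w)
    (A' := Coalgebra.comul (sl (eps k R) v) * A) (B' := Coalgebra.comul (sl (eps k R) v) * B)
    (v' := Coalgebra.comul (sl (eps k R) v) * v)
    (by rw [map_add, ← sub_eq_zero]; rw [← sub_eq_zero] at eL; rw [← neg_eq_zero, ← eL]; abel)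
  have fR := four_inj hT (w := B * (1 ⊗ₜ[k] sr (eps k R) B)) (A := v * (1 ⊗ₜ[k] sr (eps k R) B))
    (B := B * (1 ⊗ₜ[k] sr (eps k R) v)) (v := v * (1 ⊗ₜ[k] sr (eps k R) v))
    (w' := Coalgebra.comul (sr (eps k R) B) + Coalgebra.comul (sr (eps k R) v) * w)
    (A' := Coalgebra.comul (sr (eps k R) v) * A) (B' := Coalgebra.comul (sr (eps k R) v) * B)
    (v' := Coalgebra.comul (sr (eps k R) v) * v)
    (by rw [map_add, ← sub_eq_zero]; rw [← sub_eq_zero] at eR; rw [← neg_eq_zero, ← eR]; abel)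
  have fM := four_inj hT (w := A * (sr (eps k R) B ⊗ₜ[k] 1)) (A := A * (sr (eps k R) v ⊗ₜ[k] 1))
    (B := v * (sr (eps k R) B ⊗ₜ[k] 1)) (v := v * (sr (eps k R) v ⊗ₜ[k] 1))
    (w' := B * (1 ⊗ₜ[k] sl (eps k R) A)) (A' := v * (1 ⊗ₜ[k] sl (eps k R) A))
    (B' := B * (1 ⊗ₜ[k] sl (eps k R) v)) (v' := v * (1 ⊗ₜ[k] sl (eps k R) v))
    (by rw [← sub_eq_zero]; rw [← sub_eq_zero] at eM; rw [← neg_eq_zero, ← eM]; abel)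
  exact ⟨⟨hB, hA⟩, fL.1, fR.1, fM.1, fM.2.1, fM.2.2.1, fM.2.2.2⟩

theorem mul_linear_zero [IsDomain R] (hT : IsOreExtension k σ δ ι x) (l : k) (hl : l ≠ 0)
    (a q : R) (t : T) (h : t * (l • x + ι a) = ι q) : t = 0 := by
  by_contra ht
  obtain ⟨n, hn, hn'⟩ := exists_deg hT t ht
  have e : l • x + ι a = ι (l • 1) * x + ι a := by simp
  have h1 : dle hT 1 (l • x + ι a) := by
    intro i hi
    rw [e, map_add, pi_iota_x, pi_iota, if_neg (by omega), if_neg (by omega), add_zero]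
  have h2 : pi hT 1 (l • x + ι a) = l • 1 := by
    rw [e, map_add, pi_iota_x, pi_iota]; simp
  have h3 := (lead_mul hT hn h1).2
  rw [h, h2, pi_iota, if_neg (by omega)] at h3
  refine mul_ne_zero hn' ?_ h3.symm
  simp [hl]

theorem v_zero [IsDomain R] [IsDomain (R ⊗[k] R)] (H : HopfAlgebraStructure k T)
    (hH : ExtendsHopf k ι H)
    (hT : IsOreExtension k σ δ ι x) (hx : H.counit x = 0) (w A B v : R ⊗[k] R)
    (hf : HD H x = Algebra.TensorProduct.map ι ι w
      + Algebra.TensorProduct.map ι ι A * (x ⊗ₜ[k] 1)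
      + Algebra.TensorProduct.map ι ι B * (1 ⊗ₜ[k] x)
      + Algebra.TensorProduct.map ι ι v * (x ⊗ₜ[k] x)) : v = 0 := by
  by_contra hv
  obtain ⟨⟨hB, hA⟩, r1, -, -, r4, r5, r6⟩ := relations H hH hT hx w A B v hf
  have ea : eps k R (sl (eps k R) A) = 1 := by rw [eps_sl, hA, eps_one]
  have eb : eps k R (sr (eps k R) B) = 1 := by rw [← eps_sl, hB, eps_one]
  set A' := sl (eps k R) A
  set B' := sr (eps k R) B
  set l := eps k R (sr (eps k R) v) with hl
  have r6' := mul_left_cancel₀ hv r6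
  have hv' : sl (eps k R) v = l • 1 := by
    have := congrArg (sl (eps k R)) r6'
    simpa [eps_one] using this.symm
  have hv'' : sr (eps k R) v = l • 1 := by
    have := congrArg (sr (eps k R)) r6'
    simpa [eps_one, hv'] using this
  rw [hv''] at r4
  rw [hv'] at r5 r1
  have r4' : l • A = v * (1 ⊗ₜ[k] A') := by
    rw [← r4, ← smul_tmul', mul_smul_comm, ← Algebra.TensorProduct.one_def, mul_one]
  have r5' : v * (B' ⊗ₜ[k] 1) = l • B := by
    rw [r5, tmul_smul, mul_smul_comm, ← Algebra.TensorProduct.one_def, mul_one]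
  have r1' : A * (A' ⊗ₜ[k] 1) = Coalgebra.comul A' + l • w := by
    rw [r1]; simp
  have hl0 : l ≠ 0 := by
    intro h0
    rw [h0, zero_smul] at r4'
    rcases mul_eq_zero.1 r4'.symm with h | h
    · exact hv h
    · have := congrArg (sl (eps k R)) h
      simp only [sl_tmul, eps_one, one_smul, map_zero] at this
      rw [this, map_zero] at ea
      exact zero_ne_one ea
  set c := mS k R v
  have m4 : l • mS k R A = c * A' := by rw [← map_smul, r4', mS_right]
  have m5 : HopfAlgebra.antipode k B' * c = l • mS k R B := by rw [← map_smul, ← r5', mS_left]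
  have m1 : HopfAlgebra.antipode k A' * mS k R A = 1 + l • mS k R w := by
    rw [← mS_left, r1', map_add, mS_comul, ea, map_one, map_smul]
  have m1' : HopfAlgebra.antipode k A' * (c * A') = l • 1 + (l * l) • mS k R w := by
    rw [← m4, mul_smul_comm, m1, smul_add, mul_smul]
  have anti := H.antipode_mul_id x
  rw [← HD_apply, hf, hx, map_zero] at anti
  have h11 : Algebra.TensorProduct.map ι ι w = Algebra.TensorProduct.map ι ι w *
      ((1 : T) ⊗ₜ[k] (1 : T)) := by rw [← Algebra.TensorProduct.one_def, mul_one]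
  have hS1 : H.antipode 1 = 1 := by
    rw [← map_one ι, hH.2.2, HopfAlgebra.antipode_one]
  rw [h11] at anti
  have hc : mS k R v = c := rfl
  simp only [map_add, mS_J H hH, hS1, one_mul, mul_one, hc] at anti
  have key : (l • H.antipode x + ι (HopfAlgebra.antipode k B')) * ι c * (l • x + ι A') =
      ι (HopfAlgebra.antipode k B' * (c * A') - HopfAlgebra.antipode k A' * (c * A') + l • 1) := by
    have a1 : (l * l) • ι (mS k R w) = ι (HopfAlgebra.antipode k A' * (c * A')) - l • 1 := by
      rw [m1']; simp
    have a2 : (l * l) • (H.antipode x * ι (mS k R A)) = l • (H.antipode x * ι (c * A')) := by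
      rw [← m4]; simp [mul_smul]
    have a3 : (l * l) • (ι (mS k R B) * x) = l • (ι (HopfAlgebra.antipode k B' * c) * x) := by
      rw [m5]; simp [mul_smul]
    have := congrArg (fun t => (l * l) • t) anti
    simp only [smul_add, a1, a2, a3, smul_zero] at this
    simp only [map_add, map_sub, map_mul, map_smul, map_one, add_mul, mul_add, smul_mul_assoc,
      mul_smul_comm, mul_assoc, mul_smul, smul_add] at this ⊢
    rw [← sub_eq_zero, ← this]
    abel
  have hz := mul_linear_zero hT l hl0 _ _ _ key
  rw [hz, zero_mul] at key
  have q0 := hT.injective (key.symm.trans (map_zero ι).symm)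
  have := congrArg (eps k R) q0
  have es : ∀ r : R, eps k R (HopfAlgebra.antipode k r) = eps k R r := fun r => by simp [eps]
  simp only [map_add, map_sub, map_smul, map_zero, eps_mul, es, ea, eb, eps_one, sub_self,
    zero_add, smul_eq_mul, mul_one] at this
  exact hl0 this

theorem main0 [IsDomain R] [IsDomain (R ⊗[k] R)] (H : HopfAlgebraStructure k T)
    (hH : ExtendsHopf k ι H)
    (hT : IsOreExtension k σ δ ι x) (hx : H.counit x = 0) :
    ∃ (u ui β βi : R) (w : R ⊗[k] R), u * ui = 1 ∧ ui * u = 1 ∧ β * βi = 1 ∧ βi * β = 1 ∧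
      Coalgebra.comul β = β ⊗ₜ[k] β ∧ Coalgebra.counit (R := k) β = 1 ∧
      H.comul (ι u * x) = ι βi ⊗ₜ[k] (ι u * x) + (ι u * x) ⊗ₜ[k] 1
        + Algebra.TensorProduct.map ι ι w := by
  obtain ⟨w, A, B, v, hf⟩ := form H hT hH
  obtain rfl := v_zero H hH hT hx w A B v hf
  obtain ⟨⟨hB, hA⟩, r1, r2, r3, -⟩ := relations H hH hT hx w A B 0 hf
  have ea : eps k R (sl (eps k R) A) = 1 := by rw [eps_sl, hA, eps_one]
  have eb : eps k R (sr (eps k R) B) = 1 := by rw [← eps_sl, hB, eps_one]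
  simp only [map_zero, zero_mul, add_zero] at r1 r2 hf
  set A' := sl (eps k R) A
  set B' := sr (eps k R) B
  have hbB : mS k R B * B' = 1 := by
    rw [← mS_right, r2, mS_comul, eb, map_one]
  have hBb : B' * mS k R B = 1 := mul_eq_one_comm.1 hbB
  set b := mS k R B
  have hBB : Coalgebra.comul B' * (1 ⊗ₜ[k] b) = B := by
    rw [← r2, mul_assoc, Algebra.TensorProduct.tmul_mul_tmul, hBb, one_mul,
      ← Algebra.TensorProduct.one_def, mul_one]
  have hAA : B * (b ⊗ₜ[k] A') = A := by
    have : (b ⊗ₜ[k] A' : R ⊗[k] R) = (1 ⊗ₜ[k] A') * (b ⊗ₜ[k] 1) := by simp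
    rw [this, ← mul_assoc, ← r3, mul_assoc, Algebra.TensorProduct.tmul_mul_tmul, hBb, one_mul,
      ← Algebra.TensorProduct.one_def, mul_one]
  have hg : Coalgebra.comul (R := k) (b * A') = (b * A') ⊗ₜ[k] (b * A') := by
    rw [Bialgebra.comul_mul, ← r1, ← hAA]
    nth_rw 1 [← hBB]
    simp only [mul_assoc, Algebra.TensorProduct.tmul_mul_tmul, one_mul, mul_one]
    rw [← mul_assoc, ← Bialgebra.comul_mul, hbB, Bialgebra.comul_one, one_mul]
  have eg : eps k R (b * A') = 1 := by
    have := congrArg (eps k R) hbB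
    rw [eps_mul, eb, eps_one] at this
    rw [eps_mul, ea, this]
  have hig : HopfAlgebra.antipode k (b * A') * (b * A') = 1 := by
    have := mS_comul (k := k) (b * A')
    rw [hg, eg, map_one] at this
    simpa [mS] using this
  have hgi : (b * A') * HopfAlgebra.antipode k (b * A') = 1 := mul_eq_one_comm.1 hig
  set gi := HopfAlgebra.antipode k (b * A')
  have hu : (gi * b) * A' = 1 := by rw [mul_assoc, hig]
  have hu' : A' * (gi * b) = 1 := mul_eq_one_comm.1 hu
  refine ⟨gi * b, A', b * A', gi, Coalgebra.comul (gi * b) * w, hu, hu', hgi, hig, hg, eg, ?_⟩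
  have hgiB : (gi * b) * B' = gi := by rw [mul_assoc, hbB, mul_one]
  set u := gi * b
  have hΔ : Coalgebra.comul (R := k) u * Coalgebra.comul A' = 1 := by
    rw [← Bialgebra.comul_mul, hu, Bialgebra.comul_one]
  have hA2 : Coalgebra.comul A' * (u ⊗ₜ[k] 1) = A := by
    rw [← r1, mul_assoc, Algebra.TensorProduct.tmul_mul_tmul, hu', one_mul,
      ← Algebra.TensorProduct.one_def, mul_one]
  have xx : x = ι A' * (ι u * x) := by rw [← mul_assoc, ← map_mul, hu', map_one, one_mul]
  have x1 : (x ⊗ₜ[k] (1 : T)) = Algebra.TensorProduct.map ι ι (A' ⊗ₜ[k] 1) *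
      ((ι u * x) ⊗ₜ[k] (1 : T)) := by
    conv_lhs => rw [xx]
    simp
  have x2 : ((1 : T) ⊗ₜ[k] x) = Algebra.TensorProduct.map ι ι (1 ⊗ₜ[k] A') *
      ((1 : T) ⊗ₜ[k] (ι u * x)) := by
    conv_lhs => rw [xx]
    simp
  have c1 : Coalgebra.comul (R := k) u * (A * (A' ⊗ₜ[k] 1)) = 1 := by rw [r1, hΔ]
  have c2 : Coalgebra.comul (R := k) u * (B * (1 ⊗ₜ[k] A')) = gi ⊗ₜ[k] 1 := by
    rw [← r3, ← hA2, mul_assoc, ← mul_assoc, hΔ, one_mul, Algebra.TensorProduct.tmul_mul_tmul,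
      hgiB, one_mul]
  rw [← HD_apply, map_mul, HD_iota H hH, hf, x1, x2]
  simp only [mul_add, ← mul_assoc, ← map_mul]
  simp only [mul_assoc]
  rw [c1, c2]
  simp
  abel

end final
end Ore

/-- **Corollary 2.3.** Let `R` be a noetherian Hopf `k`-algebra with `R ⊗ₖ R` a domain and
suppose `T = R[x; σ, δ]` admits a Hopf algebra structure extending that of `R`.  Then after a
change of the variable `x`, `Δ(x) = β⁻¹ ⊗ x + x ⊗ 1 + w` with `β ∈ R` grouplike and
`w ∈ R ⊗ₖ R`.  In particular `Δ(x)` has the form `a ⊗ x + x ⊗ b + v(x ⊗ x) + w` with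
`a, b ∈ R` and `v, w ∈ R ⊗ₖ R`. -/
theorem stmt4 {k R T : Type*} [Field k] [Ring R] [HopfAlgebra k R]
    [IsNoetherianRing R] [IsDomain (R ⊗[k] R)] [Ring T] [Algebra k T]
    (σ : R ≃ₐ[k] R) (δ : R →ₗ[k] R) (ι : R →ₐ[k] T) (x : T)
    (hT : IsOreExtension k σ δ ι x)
    (H : HopfAlgebraStructure k T) (hH : ExtendsHopf k ι H) :
    ∃ (y : T) (σ' : R ≃ₐ[k] R) (δ' : R →ₗ[k] R),
      IsOreExtension k σ' δ' ι y ∧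
      (∃ (β βi : R) (w : R ⊗[k] R),
        β * βi = 1 ∧ βi * β = 1 ∧
        Coalgebra.comul β = β ⊗ₜ[k] β ∧ Coalgebra.counit (R := k) β = 1 ∧
        H.comul y = ι βi ⊗ₜ[k] y + y ⊗ₜ[k] 1
            + TensorProduct.map ι.toLinearMap ι.toLinearMap w) ∧
      (∃ (a b : R) (v w' : R ⊗[k] R),
        H.comul y = ι a ⊗ₜ[k] y + y ⊗ₜ[k] ι b
            + TensorProduct.map ι.toLinearMap ι.toLinearMap v * (y ⊗ₜ[k] y)
            + TensorProduct.map ι.toLinearMap ι.toLinearMap w') := by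
  classical
  have hnt : Nontrivial R := by
    by_contra h
    rw [not_nontrivial_iff_subsingleton] at h
    refine one_ne_zero (α := R ⊗[k] R) ?_
    rw [Algebra.TensorProduct.one_def, Subsingleton.elim (1 : R) 0, TensorProduct.zero_tmul]
  have hinj : Function.Injective (Algebra.TensorProduct.includeLeft : R →ₐ[k] R ⊗[k] R) :=
    Algebra.TensorProduct.includeLeft_injective (S := k) (algebraMap k R).injective
  have hdom : IsDomain R :=
    Function.Injective.isDomain
      (Algebra.TensorProduct.includeLeft : R →ₐ[k] R ⊗[k] R).toRingHom hinj
  obtain ⟨σ₀, δ₀, h0⟩ := Ore.change hT 1 1 (-(algebraMap k R (H.counit x))) (mul_one 1) (mul_one 1)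
  have hx0 : H.counit (ι 1 * x + ι (-(algebraMap k R (H.counit x)))) = 0 := by
    rw [map_add, hH.1, map_one, one_mul, Algebra.algebraMap_eq_smul_one, map_neg, map_smul]
    simp
  obtain ⟨u, ui, β, βi, w, hu, hu', hb, hb', hg, he, hD⟩ := Ore.main0 H hH h0 hx0
  obtain ⟨σ₁, δ₁, h1⟩ := Ore.change h0 u ui 0 hu hu'
  rw [map_zero, add_zero] at h1
  refine ⟨_, σ₁, δ₁, h1, ⟨β, βi, w, hb, hb', hg, he, hD⟩, βi, 1, 0, w, ?_⟩
  rw [map_zero, zero_mul, add_zero, map_one]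
  rw [map_one] at hD
  exact hD
end
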